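/- arXiv:1402.5148 — 12 statements merged into one kernel-verified Lean document; each statement's English description precedes it below -/
import Mathlib

section
/- Let ε ∈ {−1, 1}. A prime p belongs to 𝒫_ε if and only if p belongs to 𝒫_cons. In particular 𝒫_{+1} = 𝒫_{−1} = 𝒫_cons. -/
/-- `D_ε(n,m) = n^n + ε·(n−m)^(n−m)·m^m` for `ε ∈ {−1,1}` and integers `n > m ≥ 1`. -/
def trinomialD (ε : ℤ) (n m : ℕ) : ℤ :=
  (n : ℤ) ^ n + ε * ((n - m : ℕ) : ℤ) ^ (n - m) * (m : ℤ) ^ m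

/-- `x` is a nonzero `p`-th power modulo `p²`. -/
def IsNonzeroPthPower (p : ℕ) (x : ℤ) : Prop :=
  ¬ (p : ℤ) ∣ x ∧ ∃ a : ℤ, x ≡ a ^ p [ZMOD ((p : ℤ) ^ 2)]

/-!
The nonzero `p`-th powers modulo `p²` are the solutions of `x ^ (p - 1) = 1`. If `p ∤ a`, then
`(a ^ a) ^ (p - 1) = 1 + (a ^ p - a)` modulo `p²`, and `p ∣ a ^ p - a`. Hence, raised to the power
`p - 1`, the congruence `n ^ n = -ε k ^ k m ^ m` with `n = k + m` becomes `n ^ p = k ^ p + m ^ p`,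
and dividing by `m ^ p` gives consecutive `p`-th powers. Conversely, as `p²` and `p - 1` are
coprime, the residues of `n`, `k`, `m` modulo `p²` and the exponents modulo `p - 1` can be
prescribed independently, so consecutive roots of unity `x`, `x + 1` lead to a value
`(x + 1) ^ f + ε x ^ e` of `D_ε` with `e` and `f` arbitrary. For `ε = -1` take `e = f = 0`. For
`ε = 1`, some power of `x` or of `-x` is `-1`; in the second case start from `-(x + 1)`, `-x`.
-/

theorem one_add_pow_of_sq_eq_zero {R : Type*} [CommSemiring R] {z : R} (hz : z ^ 2 = 0) (n : ℕ) :
    (1 + z) ^ n = 1 + n * z := by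
  simpa [Polynomial.derivative_X_pow] using
    Polynomial.eval_add_of_sq_eq_zero (Polynomial.X ^ n) 1 z hz

section LocalRing

variable {R : Type*} [CommRing R] [IsLocalRing R]

theorem eq_one_or_eq_neg_one_of_sq_eq_one (h2 : IsUnit (2 : R)) {y : R} (hy : y ^ 2 = 1) :
    y = 1 ∨ y = -1 := by
  have hmul : (y + 1) * (y - 1) = 0 := by linear_combination hy
  have hsum : IsUnit ((y + 1) + -(y - 1)) := by ring_nf; exact h2
  rcases IsLocalRing.isUnit_or_isUnit_of_isUnit_add hsum with h | h
  · exact .inl (sub_eq_zero.mp (h.mul_right_eq_zero.mp hmul))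
  · exact .inr (eq_neg_of_add_eq_zero_left ((IsUnit.neg_iff _).mp h |>.mul_left_eq_zero.mp hmul))

theorem exists_pow_eq_neg_one_or_neg_pow_eq_neg_one (h2 : IsUnit (2 : R)) {x : R}
    (hx : IsOfFinOrder x) : ∃ e : ℕ, x ^ e = -1 ∨ (-x) ^ e = -1 := by
  have hpos := hx.orderOf_pos
  rcases Nat.even_or_odd' (orderOf x) with ⟨s, hs | hs⟩
  · have hne : x ^ s ≠ 1 := pow_ne_one_of_lt_orderOf (by omega) (by omega)
    have hsq : (x ^ s) ^ 2 = 1 := by rw [← pow_mul, mul_comm, ← hs, pow_orderOf_eq_one]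
    exact ⟨s, .inl ((eq_one_or_eq_neg_one_of_sq_eq_one h2 hsq).resolve_left hne)⟩
  · have hodd : Odd (orderOf x) := ⟨s, hs⟩
    exact ⟨orderOf x, .inr (by rw [hodd.neg_pow, pow_orderOf_eq_one])⟩

theorem isUnit_and_isUnit_add_of_add_pow_eq {x y u : R} {i j l : ℕ} (hi : i ≠ 0) (hj : j ≠ 0)
    (hu : IsUnit u) (hy : IsUnit y) (h : (x + y) ^ i = u * x ^ j * y ^ l) :
    IsUnit x ∧ IsUnit (x + y) := by
  have hiff : IsUnit (x + y) ↔ IsUnit x := by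
    rw [← isUnit_pow_iff hi, h, IsUnit.mul_iff, IsUnit.mul_iff, isUnit_pow_iff hj]
    simp only [hu, hy.pow l, true_and, and_true]
  have hor : IsUnit (x + y) ∨ IsUnit (-x) :=
    IsLocalRing.isUnit_or_isUnit_of_isUnit_add (by simpa only [add_neg_cancel_comm] using hy)
  rw [IsUnit.neg_iff, hiff, or_self] at hor
  exact ⟨hor, hiff.mpr hor⟩

end LocalRing

theorem intCast_trinomialD_add {R : Type*} [CommRing R] (ε : ℤ) (k m : ℕ) :
    (trinomialD ε (k + m) m : R) = (k + m) ^ (k + m) + ε * k ^ k * m ^ m := by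
  simp [trinomialD]

theorem isUnit_two_zmod_of_odd {n : ℕ} (hn : Odd n) : IsUnit (2 : ZMod n) :=
  (ZMod.isUnit_iff_coprime 2 n).mpr (Nat.coprime_two_left.mpr hn)

theorem exists_natCast_eq_and_modEq {N r : ℕ} [NeZero N] (h : N.Coprime r) (x : ZMod N) (e : ℕ) :
    ∃ k : ℕ, (k : ZMod N) = x ∧ k ≡ e [MOD r] := by
  obtain ⟨k, hkx, hke⟩ := Nat.chineseRemainder h x.val e
  exact ⟨k, by rw [(ZMod.natCast_eq_natCast_iff _ _ _).mpr hkx, ZMod.natCast_zmod_val], hke⟩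

section PrimePower

variable {p : ℕ} [hp : Fact p.Prime]

instance isLocalRing_zmod_prime_pow {k : ℕ} [NeZero k] : IsLocalRing (ZMod (p ^ k)) :=
  have : Fact (1 < p ^ k) := ⟨Nat.one_lt_pow (NeZero.ne k) hp.out.one_lt⟩
  .of_surjective' (PadicInt.toZModPow k) (ZMod.ringHom_surjective _)

theorem isUnit_intCast_prime_pow_iff {k : ℕ} [NeZero k] {x : ℤ} :
    IsUnit (x : ZMod (p ^ k)) ↔ ¬ (p : ℤ) ∣ x := by
  rw [ZMod.coe_int_isUnit_iff_isCoprime, Nat.cast_pow,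
    IsCoprime.pow_left_iff (Nat.pos_of_neZero k),
    (Nat.prime_iff_prime_int.mp hp.out).coprime_iff_not_dvd]

theorem odd_of_isUnit_add {k : ℕ} [NeZero k] {x y : ZMod (p ^ k)} (hx : IsUnit x) (hy : IsUnit y)
    (hxy : IsUnit (x + y)) : Odd p := by
  have add_eq_zero_mod_two : ∀ a b : ZMod 2, a ≠ 0 → b ≠ 0 → a + b = 0 := by decide
  refine hp.out.eq_two_or_odd'.resolve_left ?_
  rintro rfl
  let red := ZMod.castHom (dvd_pow_self 2 (NeZero.ne k)) (ZMod 2)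
  have hsum := (hxy.map red).ne_zero
  rw [map_add] at hsum
  exact hsum (add_eq_zero_mod_two _ _ (hx.map red).ne_zero (hy.map red).ne_zero)

end PrimePower

section ModPrimeSq

variable {p : ℕ} [hp : Fact p.Prime]

theorem pow_prime_pow_sub_one_eq_one {u : ZMod (p ^ 2)} (hu : IsUnit u) :
    (u ^ p) ^ (p - 1) = 1 := by
  obtain ⟨v, rfl⟩ := hu
  rw [← pow_mul]
  simpa [Nat.totient_prime_pow hp.out two_pos] using congrArg Units.val (ZMod.pow_totient v)

theorem isUnit_of_pow_prime_sub_one_eq_one {x : ZMod (p ^ 2)} (hx : x ^ (p - 1) = 1) : IsUnit x :=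
  .of_pow_eq_one hx (Nat.sub_ne_zero_of_lt hp.out.one_lt)

theorem isNonzeroPthPower_iff {x : ℤ} :
    IsNonzeroPthPower p x ↔ (x : ZMod (p ^ 2)) ^ (p - 1) = 1 := by
  have hmod : ∀ a : ℤ, x ≡ a ^ p [ZMOD (p : ℤ) ^ 2] ↔ (x : ZMod (p ^ 2)) = a ^ p := fun a ↦ by
    rw [← Nat.cast_pow p 2, ← ZMod.intCast_eq_intCast_iff, Int.cast_pow]
  simp only [IsNonzeroPthPower, hmod, ← isUnit_intCast_prime_pow_iff (k := 2)]
  constructor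
  · rintro ⟨hx, a, ha⟩
    rw [ha] at hx ⊢
    exact pow_prime_pow_sub_one_eq_one ((isUnit_pow_iff hp.out.ne_zero).mp hx)
  · intro h
    exact ⟨isUnit_of_pow_prime_sub_one_eq_one h, x,
      by rw [← pow_sub_one_mul hp.out.ne_zero, h, one_mul]⟩

variable (p) in
/-- The ring `ℤ/p²` contains two `(p - 1)`-th roots of unity that differ by `1`. For `p` prime this
expresses `p ∈ 𝒫_cons` inside `ZMod (p ^ 2)`. -/
def HasConsecutiveRootsOfUnity : Prop :=
  ∃ x : ZMod (p ^ 2), x ^ (p - 1) = 1 ∧ (x + 1) ^ (p - 1) = 1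

theorem exists_isNonzeroPthPower_add_one_iff :
    (∃ x y : ℤ, IsNonzeroPthPower p x ∧ IsNonzeroPthPower p y ∧
      y ≡ x + 1 [ZMOD ((p : ℤ) ^ 2)]) ↔ HasConsecutiveRootsOfUnity p := by
  simp only [isNonzeroPthPower_iff]
  constructor
  · rintro ⟨x, y, hx, hy, hxy⟩
    rw [← Nat.cast_pow p 2, ← ZMod.intCast_eq_intCast_iff, Int.cast_add, Int.cast_one] at hxy
    exact ⟨x, hx, hxy ▸ hy⟩
  · rintro ⟨x, hx, hx1⟩
    obtain ⟨z, rfl⟩ := ZMod.intCast_surjective x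
    exact ⟨z, z + 1, hx, by exact_mod_cast hx1, Int.ModEq.refl _⟩

theorem natCast_dvd_pow_prime_sub_self (a : ZMod (p ^ 2)) : (p : ZMod (p ^ 2)) ∣ a ^ p - a := by
  obtain ⟨z, rfl⟩ := ZMod.intCast_surjective a
  simpa using map_dvd (Int.castRingHom (ZMod (p ^ 2))) (Int.prime_dvd_pow_self_sub hp.out z)

theorem mul_eq_zero_of_natCast_dvd {n : ℕ} {a b : ZMod (n ^ 2)} (ha : (n : ZMod (n ^ 2)) ∣ a)
    (hb : (n : ZMod (n ^ 2)) ∣ b) : a * b = 0 := by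
  have h := mul_dvd_mul ha hb
  rwa [← sq, ← Nat.cast_pow, ZMod.natCast_self, zero_dvd_iff] at h

theorem natCast_pow_self_pow_prime_sub_one {a : ℕ} (ha : IsUnit (a : ZMod (p ^ 2))) :
    ((a : ZMod (p ^ 2)) ^ a) ^ (p - 1) = 1 + (a ^ p - a) := by
  obtain ⟨z, hz⟩ : ∃ z : ZMod (p ^ 2), (a : ZMod (p ^ 2)) ^ (p - 1) = 1 + z :=
    ⟨_, (add_sub_cancel _ _).symm⟩
  have hmul : (a : ZMod (p ^ 2)) * z = a ^ p - a := by
    rw [← mul_pow_sub_one hp.out.ne_zero, hz]; ring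
  have hdvd : (p : ZMod (p ^ 2)) ∣ z :=
    ha.dvd_mul_left.mp (hmul ▸ natCast_dvd_pow_prime_sub_self _)
  have hsq : z ^ 2 = 0 := (sq z).trans (mul_eq_zero_of_natCast_dvd hdvd hdvd)
  rw [pow_right_comm, hz, one_add_pow_of_sq_eq_zero hsq, hmul]

theorem natCast_add_pow_prime {k m : ℕ} (hk : IsUnit (k : ZMod (p ^ 2)))
    (hm : IsUnit (m : ZMod (p ^ 2))) (hkm : IsUnit (k + m : ZMod (p ^ 2)))
    (h : ((k + m : ZMod (p ^ 2)) ^ (k + m)) ^ (p - 1) =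
      ((k : ZMod (p ^ 2)) ^ k) ^ (p - 1) * ((m : ZMod (p ^ 2)) ^ m) ^ (p - 1)) :
    (k + m : ZMod (p ^ 2)) ^ p = k ^ p + m ^ p := by
  rw [← Nat.cast_add] at h hkm ⊢
  rw [natCast_pow_self_pow_prime_sub_one hk, natCast_pow_self_pow_prime_sub_one hm,
    natCast_pow_self_pow_prime_sub_one hkm, Nat.cast_add] at h
  have hcross : (k ^ p - k : ZMod (p ^ 2)) * (m ^ p - m) = 0 :=
    mul_eq_zero_of_natCast_dvd (natCast_dvd_pow_prime_sub_self _) (natCast_dvd_pow_prime_sub_self _)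
  push_cast
  linear_combination h + hcross

theorem hasConsecutiveRootsOfUnity_of_add_pow_prime {a b : ZMod (p ^ 2)} (ha : IsUnit a)
    (hb : IsUnit b) (hab : IsUnit (a + b)) (h : (a + b) ^ p = a ^ p + b ^ p) :
    HasConsecutiveRootsOfUnity p := by
  obtain ⟨v, rfl⟩ := hb
  have hsucc : (a * ↑v⁻¹) ^ p + 1 = ((a + v) * ↑v⁻¹) ^ p := by
    rw [mul_pow, mul_pow, h, add_mul, ← mul_pow (v : ZMod (p ^ 2)), Units.mul_inv, one_pow]
  refine ⟨(a * ↑v⁻¹) ^ p, pow_prime_pow_sub_one_eq_one (ha.mul v⁻¹.isUnit), ?_⟩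
  rw [hsucc, pow_prime_pow_sub_one_eq_one (hab.mul v⁻¹.isUnit)]

theorem hasConsecutiveRootsOfUnity_of_trinomialD_eq_zero {ε : ℤ} (hε : ε = 1 ∨ ε = -1) {n m : ℕ}
    (hmn : m < n) (hm : IsUnit (m : ZMod (p ^ 2))) (h : (trinomialD ε n m : ZMod (p ^ 2)) = 0) :
    HasConsecutiveRootsOfUnity p := by
  obtain ⟨k, rfl⟩ := Nat.exists_eq_add_of_le' hmn.le
  rw [intCast_trinomialD_add] at h
  have heq : (k + m : ZMod (p ^ 2)) ^ (k + m) = -ε * k ^ k * m ^ m := by linear_combination h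
  have hεunit : IsUnit (-ε : ZMod (p ^ 2)) := by rcases hε with rfl | rfl <;> simp
  obtain ⟨hk, hkm⟩ :=
    isUnit_and_isUnit_add_of_add_pow_eq (by omega) (by omega) hεunit hm heq
  have heven : Even (p - 1) := (odd_of_isUnit_add hk hm hkm).tsub_odd odd_one
  have hεpow : (-ε : ZMod (p ^ 2)) ^ (p - 1) = 1 := by
    rcases hε with rfl | rfl <;> simp [heven.neg_one_pow]
  refine hasConsecutiveRootsOfUnity_of_add_pow_prime hk hm hkm (natCast_add_pow_prime hk hm hkm ?_)
  rw [heq, mul_pow, mul_pow, hεpow, one_mul]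

theorem exists_intCast_trinomialD_eq {x : ZMod (p ^ 2)} (hx : x ^ (p - 1) = 1)
    (hx1 : (x + 1) ^ (p - 1) = 1) (ε : ℤ) (e f : ℕ) :
    ∃ n m : ℕ, 0 < m ∧ m < n ∧ IsUnit (m : ZMod (p ^ 2)) ∧
      (trinomialD ε n m : ZMod (p ^ 2)) = (x + 1) ^ f + (ε : ZMod (p ^ 2)) * x ^ e := by
  have hpos : 0 < p - 1 := Nat.sub_pos_of_lt hp.out.one_lt
  have hcop : (p ^ 2).Coprime (p - 1) :=
    (Nat.coprime_of_lt_prime hpos.ne' (Nat.sub_lt hp.out.pos one_pos) hp.out).pow_left 2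
  have natCast_unit_pos : ∀ a : ℕ, IsUnit (a : ZMod (p ^ 2)) → 0 < a := fun a ha ↦
    Nat.pos_of_ne_zero fun h0 ↦ ha.ne_zero (by rw [h0, Nat.cast_zero])
  obtain ⟨k, hkx, hke⟩ := exists_natCast_eq_and_modEq hcop x e
  obtain ⟨m, hm1, hmf⟩ := exists_natCast_eq_and_modEq hcop 1 (f + (p - 2) * e)
  have hkunit : IsUnit (k : ZMod (p ^ 2)) := hkx ▸ isUnit_of_pow_prime_sub_one_eq_one hx
  have hmunit : IsUnit (m : ZMod (p ^ 2)) := hm1 ▸ isUnit_one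
  have hkm : k + m ≡ f [MOD p - 1] := by
    have hsum : e + (f + (p - 2) * e) = f + (p - 1) * e := by
      rw [show p - 1 = p - 2 + 1 by omega]; ring
    exact (hke.add hmf).trans (by simp [hsum, Nat.ModEq])
  refine ⟨k + m, m, natCast_unit_pos m hmunit, Nat.lt_add_of_pos_left (natCast_unit_pos k hkunit),
    hmunit, ?_⟩
  rw [intCast_trinomialD_add, hkx, hm1, one_pow, mul_one, pow_eq_pow_of_modEq hkm hx1,
    pow_eq_pow_of_modEq hke hx]

theorem HasConsecutiveRootsOfUnity.exists_trinomialD_eq_zero (h : HasConsecutiveRootsOfUnity p)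
    {ε : ℤ} (hε : ε = 1 ∨ ε = -1) :
    ∃ n m : ℕ, 0 < m ∧ m < n ∧ IsUnit (m : ZMod (p ^ 2)) ∧
      (trinomialD ε n m : ZMod (p ^ 2)) = 0 := by
  obtain ⟨x, hx, hx1⟩ := h
  rcases hε with rfl | rfl
  · have hodd : Odd p := odd_of_isUnit_add (isUnit_of_pow_prime_sub_one_eq_one hx) isUnit_one
      (isUnit_of_pow_prime_sub_one_eq_one hx1)
    have heven : Even (p - 1) := hodd.tsub_odd odd_one
    have hfin : IsOfFinOrder x :=
      isOfFinOrder_iff_pow_eq_one.mpr ⟨p - 1, Nat.sub_pos_of_lt hp.out.one_lt, hx⟩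
    obtain ⟨e, he | he⟩ :=
      exists_pow_eq_neg_one_or_neg_pow_eq_neg_one (isUnit_two_zmod_of_odd hodd.pow) hfin
    · simpa [he] using exists_intCast_trinomialD_eq hx hx1 1 e 0
    · have hneg : -(x + 1) + 1 = -x := by ring
      have hpair := exists_intCast_trinomialD_eq (x := -(x + 1))
        (by rw [heven.neg_pow, hx1]) (by rw [hneg, heven.neg_pow, hx]) 1 0 e
      simpa only [hneg, he, pow_zero, mul_one, Int.cast_one, neg_add_cancel] using hpair
  · simpa using exists_intCast_trinomialD_eq hx hx1 (-1) 0 0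

end ModPrimeSq

/-- A prime `p` belongs to `𝒫_ε` if and only if it belongs to `𝒫_cons`.
In particular `𝒫_{+1} = 𝒫_{−1} = 𝒫_cons`. -/
theorem P_eps_eq_P_cons (p : ℕ) (hp : p.Prime) (ε : ℤ) (hε : ε = 1 ∨ ε = -1) :
    (∃ n m : ℕ, 0 < m ∧ m < n ∧ ¬ (p : ℤ) ∣ (m : ℤ) ∧
        ((p : ℤ) ^ 2 ∣ trinomialD ε n m)) ↔
      (∃ x y : ℤ, IsNonzeroPthPower p x ∧ IsNonzeroPthPower p y ∧
        y ≡ x + 1 [ZMOD ((p : ℤ) ^ 2)]) := by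
  have : Fact p.Prime := ⟨hp⟩
  have hunit : ∀ m : ℕ, ¬ (p : ℤ) ∣ m ↔ IsUnit (m : ZMod (p ^ 2)) := fun m ↦ by
    rw [← isUnit_intCast_prime_pow_iff (k := 2), Int.cast_natCast]
  have hdvd : ∀ z : ℤ, (p : ℤ) ^ 2 ∣ z ↔ (z : ZMod (p ^ 2)) = 0 := fun z ↦ by
    rw [ZMod.intCast_zmod_eq_zero_iff_dvd, Nat.cast_pow]
  simp only [exists_isNonzeroPthPower_add_one_iff, hunit, hdvd]
  constructor
  · rintro ⟨n, m, -, hmn, hm, hD⟩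
    exact hasConsecutiveRootsOfUnity_of_trinomialD_eq_zero hε hmn hm hD
  · intro h
    exact h.exists_trinomialD_eq_zero hε
end

section
/- If n is a positive integer with n ≡ 2 (mod 6), then ((n² − n + 1)/3)² divides n^n − (n−1)^(n−1). -/
/-!
Put `N = x² - x + 1`. Then `x³ = -1 + N(x + 1)`, so `x⁶ᵏ ≡ 1 - 2kN(x + 1)` modulo `N²`; since `N` is
invariant under `x ↦ 1 - x`, the same expansion applies to `(x - 1)⁶ᵏ`. Together they give
`x⁶ᵏ⁺² - (x - 1)⁶ᵏ⁺¹ ≡ N(1 + 2k(x + 1))` modulo `N²`. If `N = 3q`, the right-hand side is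
`q(3 + 6k(x + 1))`, and for `x ≡ 6k + 2` modulo `q` the second factor is congruent to
`3 + (x - 2)(x + 1) = N`, giving a second factor `q`.
-/

section CommRing

variable {R : Type*} [CommRing R]

lemma sq_dvd_pow_six_mul_sub (x : R) (k : ℕ) :
    (x ^ 2 - x + 1) ^ 2 ∣ x ^ (6 * k) - (1 - 2 * k * (x + 1) * (x ^ 2 - x + 1)) := by
  set N := x ^ 2 - x + 1 with hN
  set y := (x + 1) * (N * (x + 1) - 2) with hy
  have pow_six : x ^ 6 = 1 + N * y := by
    rw [hy, hN]
    ring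
  have binomial : N ^ 2 ∣ (1 + N * y) ^ k - (1 + k * (N * y)) := by
    have h := sq_dvd_add_pow_sub_sub (N * y) 1 k
    rw [mul_pow] at h
    convert dvd_of_mul_right_dvd h using 1
    ring
  rw [pow_mul, pow_six]
  convert binomial.add (dvd_mul_right (N ^ 2) (k * (x + 1) ^ 2)) using 1
  rw [hy]
  ring

lemma sq_dvd_pow_sub_sub_one_pow_sub (x : R) (k : ℕ) :
    (x ^ 2 - x + 1) ^ 2 ∣
      x ^ (6 * k + 2) - (x - 1) ^ (6 * k + 1) - (x ^ 2 - x + 1) * (1 + 2 * k * (x + 1)) := by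
  obtain ⟨a, ha⟩ := sq_dvd_pow_six_mul_sub x k
  obtain ⟨b, hb⟩ := sq_dvd_pow_six_mul_sub (1 - x) k
  have even_exponent : (1 - x) ^ (6 * k) = (x - 1) ^ (6 * k) := by
    rw [← neg_sub x 1, Even.neg_pow (Even.mul_right (by decide) k)]
  rw [even_exponent] at hb
  refine ⟨x ^ 2 * a - (x - 1) * b - 2 * k * (x + 3), ?_⟩
  linear_combination x ^ 2 * ha - (x - 1) * hb

lemma three_dvd_sq_sub_self_add_one {x : R} (hx : 3 ∣ x - 2) : 3 ∣ x ^ 2 - x + 1 := by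
  convert (hx.mul_right (x + 1)).add (dvd_refl 3) using 1
  ring

theorem strange_divisibility_n_general {x q : R} {m : ℕ} (hm : m % 6 = 2)
    (hq : x ^ 2 - x + 1 = 3 * q) (hx : q ∣ x - m) :
    q ^ 2 ∣ x ^ m - (x - 1) ^ (m - 1) := by
  obtain ⟨k, rfl⟩ : ∃ k, m = 6 * k + 2 := ⟨m / 6, by lia⟩
  have expansion : q ^ 2 ∣ x ^ (6 * k + 2) - (x - 1) ^ (6 * k + 1) -
      3 * q * (1 + 2 * k * (x + 1)) := by
    have h := sq_dvd_pow_sub_sub_one_pow_sub x k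
    rw [hq] at h
    exact (pow_dvd_pow_of_dvd (dvd_mul_left q 3) 2).trans h
  have second_factor : q ∣ 3 * (1 + 2 * k * (x + 1)) := by
    convert (dvd_mul_left q 3).sub (hx.mul_right (x + 1)) using 1
    push_cast
    linear_combination hq
  have main_term : q ^ 2 ∣ 3 * q * (1 + 2 * k * (x + 1)) := by
    convert mul_dvd_mul_left q second_factor using 1 <;> ring
  exact (dvd_sub_left main_term).mp expansion

end CommRing

/-- If `n` is a positive integer with `n ≡ 2 (mod 6)`, then `((n² − n + 1)/3)²`
divides `n^n − (n−1)^(n−1)`.  (When `n ≡ 2 (mod 6)`, `3 ∣ n² − n + 1`, so the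
integer division is exact.) -/
theorem strange_divisibility_n (n : ℕ) (hn : 0 < n) (h6 : n % 6 = 2) :
    ((((n : ℤ) ^ 2 - n + 1) / 3) ^ 2) ∣ (n : ℤ) ^ n - ((n : ℤ) - 1) ^ (n - 1) := by
  have three_dvd : (3 : ℤ) ∣ (n : ℤ) ^ 2 - n + 1 := three_dvd_sq_sub_self_add_one (by lia)
  exact strange_divisibility_n_general h6 (Int.mul_ediv_cancel' three_dvd).symm (by simp)
end

section
/- For every nonnegative integer k, the integer (12k² + 6k + 1)² divides (6k+2)^(6k+2) − (6k+1)^(6k+1). -/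
/-!
Put `ε = x² + x + 1`. Since `x³ = 1 + (x - 1) ε`, powers of `x³` are affine in the exponent
modulo `ε²`. The involution `x ↦ -1 - x` fixes `ε`, so the same holds for even powers of
`(x + 1)³`; comparing the two gives `(x + 1)^(6k+2) - x^(6k+1) ≡ ε (2kx + 4k + 1)` modulo `ε²`.
At `x = 6k + 1` the second factor equals `M = 12k² + 6k + 1`, while `ε = 3M`.
-/

section CommRing

variable {R : Type*} [CommRing R]

theorem sq_sq_add_self_add_one_dvd_pow_three_mul_sub (x : R) (m : ℕ) :
    (x ^ 2 + x + 1) ^ 2 ∣ x ^ (3 * m) - (1 + m * (x - 1) * (x ^ 2 + x + 1)) := by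
  have cube_eq : x ^ 3 = 1 + (x - 1) * (x ^ 2 + x + 1) := by ring
  obtain ⟨c, hc⟩ := Polynomial.powAddExpansion 1 ((x - 1) * (x ^ 2 + x + 1)) m
  refine ⟨c * (x - 1) ^ 2, ?_⟩
  rw [pow_mul, cube_eq, hc, one_pow, one_pow]
  ring

theorem sq_sq_add_self_add_one_dvd_add_one_pow_six_mul_sub (x : R) (k : ℕ) :
    (x ^ 2 + x + 1) ^ 2 ∣ (x + 1) ^ (6 * k) - (1 - 2 * k * (x + 2) * (x ^ 2 + x + 1)) := by
  have reflect_eq : (-1 - x) ^ 2 + (-1 - x) + 1 = x ^ 2 + x + 1 := by ring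
  have reflect_pow : (-1 - x) ^ (3 * (2 * k)) = (x + 1) ^ (6 * k) := by
    rw [← ((even_two_mul k).mul_left 3).neg_pow]
    ring
  have h := sq_sq_add_self_add_one_dvd_pow_three_mul_sub (-1 - x) (2 * k)
  rw [reflect_eq, reflect_pow] at h
  convert h using 1
  push_cast
  ring

theorem sq_sq_add_self_add_one_dvd_add_one_pow_sub_pow_sub (x : R) (k : ℕ) :
    (x ^ 2 + x + 1) ^ 2 ∣
      (x + 1) ^ (6 * k + 2) - x ^ (6 * k + 1) - (x ^ 2 + x + 1) * (2 * k * x + 4 * k + 1) := by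
  obtain ⟨a, ha⟩ := sq_sq_add_self_add_one_dvd_add_one_pow_six_mul_sub x k
  obtain ⟨b, hb⟩ := sq_sq_add_self_add_one_dvd_pow_three_mul_sub x (2 * k)
  rw [← mul_assoc] at hb
  push_cast at hb
  refine ⟨(x + 1) ^ 2 * a - x * b - 2 * k * (x + 4), ?_⟩
  linear_combination (x + 1) ^ 2 * ha - x * hb

end CommRing

theorem strange_divisibility_k_general (k : ℕ) :
    (6 * (k : ℤ) + 2) ^ (6 * k + 2) - (6 * (k : ℤ) + 1) ^ (6 * k + 1) ≡
      3 * (12 * (k : ℤ) ^ 2 + 6 * k + 1) ^ 2 [ZMOD (3 * (12 * (k : ℤ) ^ 2 + 6 * k + 1)) ^ 2] := by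
  have sq_add_self_add_one_eq : (6 * (k : ℤ) + 1) ^ 2 + (6 * k + 1) + 1 =
      3 * (12 * (k : ℤ) ^ 2 + 6 * k + 1) := by ring
  have linear_factor_eq : 2 * (k : ℤ) * (6 * k + 1) + 4 * k + 1 =
      12 * (k : ℤ) ^ 2 + 6 * k + 1 := by ring
  have add_one_eq : 6 * (k : ℤ) + 1 + 1 = 6 * k + 2 := by ring
  have h := sq_sq_add_self_add_one_dvd_add_one_pow_sub_pow_sub (6 * (k : ℤ) + 1) k
  rw [sq_add_self_add_one_eq, linear_factor_eq, add_one_eq, mul_assoc 3, ← sq] at h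
  exact (Int.modEq_iff_dvd.mpr h).symm

/-- For every nonnegative integer `k`, the integer `(12k² + 6k + 1)²` divides
`(6k+2)^(6k+2) − (6k+1)^(6k+1)`. -/
theorem strange_divisibility_k (k : ℕ) :
    ((12 * (k : ℤ) ^ 2 + 6 * k + 1) ^ 2) ∣
      (6 * (k : ℤ) + 2) ^ (6 * k + 2) - (6 * (k : ℤ) + 1) ^ (6 * k + 1) :=
  ((strange_divisibility_k_general k).of_dvd (pow_dvd_pow_of_dvd (dvd_mul_left _ 3) 2)).dvd_iff.mpr
    (dvd_mul_left _ 3)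
end

section
/- Let p be a prime, let ε ∈ {−1,1}, and let m and n be positive integers not divisible by p. If m′ and n′ are positive integers with m′ ≡ m (mod p(p−1)) and n′ ≡ n (mod p(p−1)), m′ < n′ and m < n, then p² divides D_ε(n,m) if and only if p² divides D_ε(n′,m′). -/
/-!
If `a`, `b` are positive and `b ≡ a` modulo `p(p-1) = φ(p²)`, then `b ^ b ≡ b ^ a` modulo `p²`: by
Euler's theorem if `p ∤ b`, and because both powers vanish if `p ∣ b`. The first-order binomial
expansion turns this into `b ^ b ≡ a ^ a * (1 + (b - a))`. Modulo `p²` the factor `1 + (b - a)` is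
multiplicative in the increment `b - a`, and the increments of `n - m` and of `m` add up to that of
`n`. So both terms of `D_ε(n,m)` acquire the same factor: `D_ε(n',m') ≡ D_ε(n,m) * (1 + (n' - n))`.
By symmetry each of the two values divides the other modulo `p²`.
-/

theorem pow_modEq_pow_of_modEq_totient {N c a b : ℕ} (hc : c.Coprime N)
    (h : b ≡ a [MOD N.totient]) : c ^ b ≡ c ^ a [MOD N] := by
  have euler : (c : ZMod N) ^ N.totient = 1 := by
    exact_mod_cast (ZMod.natCast_eq_natCast_iff _ _ _).2 (Nat.ModEq.pow_totient hc)
  rw [← ZMod.natCast_eq_natCast_iff, Nat.cast_pow, Nat.cast_pow]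
  exact pow_eq_pow_of_modEq h euler

theorem pow_dvd_pow_of_dvd_of_dvd {d k a b : ℕ} (hk : k ≤ d) (ha : a ≠ 0) (hda : d ∣ a)
    (hdb : d ∣ b) : d ^ k ∣ b ^ a :=
  have k_le_a : k ≤ a := hk.trans (Nat.le_of_dvd (Nat.pos_of_ne_zero ha) hda)
  (pow_dvd_pow d k_le_a).trans (pow_dvd_pow_of_dvd hdb a)

theorem pow_self_modEq_pow {p a b : ℕ} (hp : p.Prime) (ha : a ≠ 0) (hb : b ≠ 0)
    (h : b ≡ a [MOD p * (p - 1)]) : b ^ b ≡ b ^ a [MOD p ^ 2] := by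
  by_cases hpb : p ∣ b
  · have hpa : p ∣ a := ((h.of_mul_right _).dvd_iff dvd_rfl).1 hpb
    have hbb : p ^ 2 ∣ b ^ b := pow_dvd_pow_of_dvd_of_dvd hp.two_le hb hpb hpb
    have hba : p ^ 2 ∣ b ^ a := pow_dvd_pow_of_dvd_of_dvd hp.two_le ha hpa hpb
    exact hbb.modEq_zero_nat.trans hba.modEq_zero_nat.symm
  · have hcoprime : b.Coprime (p ^ 2) := (hp.coprime_iff_not_dvd.2 hpb).symm.pow_right 2
    have htotient : (p ^ 2).totient = p * (p - 1) := by
      simp [Nat.totient_prime_pow hp two_pos]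
    exact pow_modEq_pow_of_modEq_totient hcoprime (htotient ▸ h)

theorem pow_modEq_pow_self_mul_one_add_sub {d b : ℤ} {a : ℕ} (ha : a ≠ 0) (h : d ∣ b - a) :
    b ^ a ≡ (a : ℤ) ^ a * (1 + (b - a)) [ZMOD d ^ 2] := by
  have taylor : (b - a) ^ 2 ∣ b ^ a - (a : ℤ) ^ (a - 1) * (b - a) * a - (a : ℤ) ^ a := by
    simpa only [add_sub_cancel] using sq_dvd_add_pow_sub_sub (b - a) (a : ℤ) a
  have regroup : b ^ a - (a : ℤ) ^ (a - 1) * (b - a) * a - (a : ℤ) ^ a =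
      b ^ a - (a : ℤ) ^ a * (1 + (b - a)) := by
    linear_combination (a - b) * mul_pow_sub_one ha (a : ℤ)
  rw [regroup] at taylor
  exact (Int.modEq_iff_dvd.2 ((pow_dvd_pow_of_dvd h 2).trans taylor)).symm

theorem pow_self_modEq_pow_self_mul {p a b : ℕ} (hp : p.Prime) (ha : a ≠ 0) (hb : b ≠ 0)
    (h : b ≡ a [MOD p * (p - 1)]) :
    (b : ℤ) ^ b ≡ (a : ℤ) ^ a * (1 + (b - a)) [ZMOD (p : ℤ) ^ 2] :=
  calc
    (b : ℤ) ^ b ≡ (b : ℤ) ^ a [ZMOD (p : ℤ) ^ 2] := by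
      exact_mod_cast Int.natCast_modEq_iff.2 (pow_self_modEq_pow hp ha hb h)
    _ ≡ (a : ℤ) ^ a * (1 + (b - a)) [ZMOD (p : ℤ) ^ 2] :=
      pow_modEq_pow_self_mul_one_add_sub ha (h.of_mul_right _).symm.dvd

theorem one_add_mul_one_add_modEq {d s t : ℤ} (hs : d ∣ s) (ht : d ∣ t) :
    (1 + s) * (1 + t) ≡ 1 + (s + t) [ZMOD d ^ 2] := by
  have hst : d ^ 2 ∣ s * t := sq d ▸ mul_dvd_mul hs ht
  rw [show (1 + s) * (1 + t) = 1 + (s + t) + s * t by ring]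
  exact Int.add_modEq_left_iff.2 hst

theorem trinomialD_modEq {p m n m' n' : ℕ} (hp : p.Prime) (ε : ℤ) (hm : 0 < m) (hm' : 0 < m')
    (hmm' : m' ≡ m [MOD p * (p - 1)]) (hnn' : n' ≡ n [MOD p * (p - 1)])
    (hlt : m < n) (hlt' : m' < n') :
    trinomialD ε n' m' ≡ trinomialD ε n m * (1 + (n' - n)) [ZMOD (p : ℤ) ^ 2] := by
  let d := n - m
  let d' := n' - m'
  have hd : (d : ℤ) = n - m := Nat.cast_sub hlt.le
  have hd' : (d' : ℤ) = n' - m' := Nat.cast_sub hlt'.le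
  have hdd' : d' ≡ d [MOD p * (p - 1)] := hnn'.sub hlt'.le hlt.le hmm'
  have n_term : (n' : ℤ) ^ n' ≡ (n : ℤ) ^ n * (1 + (n' - n)) [ZMOD (p : ℤ) ^ 2] :=
    pow_self_modEq_pow_self_mul hp (by lia) (by lia) hnn'
  have m_term : (m' : ℤ) ^ m' ≡ (m : ℤ) ^ m * (1 + (m' - m)) [ZMOD (p : ℤ) ^ 2] :=
    pow_self_modEq_pow_self_mul hp hm.ne' hm'.ne' hmm'
  have d_term : (d' : ℤ) ^ d' ≡ (d : ℤ) ^ d * (1 + (d' - d)) [ZMOD (p : ℤ) ^ 2] :=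
    pow_self_modEq_pow_self_mul hp (by lia) (by lia) hdd'
  have factors : (1 + (d' - d : ℤ)) * (1 + (m' - m)) ≡ 1 + (n' - n) [ZMOD (p : ℤ) ^ 2] := by
    have increments : (n' - n : ℤ) = (d' - d) + (m' - m) := by rw [hd, hd']; ring
    rw [increments]
    exact one_add_mul_one_add_modEq (hdd'.of_mul_right _).symm.dvd (hmm'.of_mul_right _).symm.dvd
  calc
    trinomialD ε n' m' = (n' : ℤ) ^ n' + ε * (d' : ℤ) ^ d' * (m' : ℤ) ^ m' := rfl
    _ ≡ (n : ℤ) ^ n * (1 + (n' - n)) +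
          ε * ((d : ℤ) ^ d * (1 + (d' - d))) * ((m : ℤ) ^ m * (1 + (m' - m)))
          [ZMOD (p : ℤ) ^ 2] := n_term.add ((d_term.mul_left ε).mul m_term)
    _ = (n : ℤ) ^ n * (1 + (n' - n)) +
          ε * (d : ℤ) ^ d * (m : ℤ) ^ m * ((1 + (d' - d)) * (1 + (m' - m))) := by ring
    _ ≡ (n : ℤ) ^ n * (1 + (n' - n)) + ε * (d : ℤ) ^ d * (m : ℤ) ^ m * (1 + (n' - n))
          [ZMOD (p : ℤ) ^ 2] := (factors.mul_left _).add_left _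
    _ = trinomialD ε n m * (1 + (n' - n)) := (add_mul _ _ _).symm

theorem residue_classes_mod_p_pminus1_general {p m n m' n' : ℕ} (hp : p.Prime) (ε : ℤ)
    (hm : 0 < m) (hm' : 0 < m')
    (hmm' : m' ≡ m [MOD p * (p - 1)]) (hnn' : n' ≡ n [MOD p * (p - 1)])
    (hlt : m < n) (hlt' : m' < n') :
    (p : ℤ) ^ 2 ∣ trinomialD ε n m ↔ (p : ℤ) ^ 2 ∣ trinomialD ε n' m' := by
  have forward := trinomialD_modEq hp ε hm hm' hmm' hnn' hlt hlt'
  have backward := trinomialD_modEq hp ε hm' hm hmm'.symm hnn'.symm hlt' hlt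
  exact ⟨fun h => forward.dvd_iff.2 (h.mul_right _), fun h => backward.dvd_iff.2 (h.mul_right _)⟩

/-- Whether `p² ∣ D_ε(n,m)` (for `p ∤ mn`) depends only on the residue classes of
`n` and `m` modulo `p(p−1)`. -/
theorem residue_classes_mod_p_pminus1 (p : ℕ) (hp : p.Prime) (ε : ℤ) (hε : ε = 1 ∨ ε = -1)
    (m n m' n' : ℕ) (hm : 0 < m) (hn : 0 < n) (hm' : 0 < m') (hn' : 0 < n')
    (hpm : ¬ (p : ℤ) ∣ (m : ℤ)) (hpn : ¬ (p : ℤ) ∣ (n : ℤ))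
    (hmm' : m' ≡ m [MOD p * (p - 1)]) (hnn' : n' ≡ n [MOD p * (p - 1)])
    (hlt : m < n) (hlt' : m' < n') :
    (p : ℤ) ^ 2 ∣ trinomialD ε n m ↔ (p : ℤ) ^ 2 ∣ trinomialD ε n' m' :=
  residue_classes_mod_p_pminus1_general hp ε hm hm' hmm' hnn' hlt hlt'
end

section
/- Let p be a prime, let m, n, and ℓ be integers with 0 < m < n, and let r be a positive integer with r ≡ n (mod p) and r > m. Then p² divides r^n + ℓ·(r−m)^(n−m) if and only if p² divides n^n + ℓ·(n−m)^(n−m). -/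
/-!
The derivative of `x ^ e` at `x = e` is `e * e ^ (e - 1) = e ^ e`, the value of the function itself,
so `(e + y) ^ e ≡ e ^ e * (1 + y)` modulo `y ^ 2`. With `y = r - n`, moving from `n` to `r` thus
multiplies both `n ^ n` and `(n - m) ^ (n - m)` by the same factor `1 + y` modulo `p ^ 2`, and this
factor is coprime to `p` because `p ∣ y`.
-/

section CommRing

variable {R : Type*} [CommRing R]

theorem sq_dvd_natCast_add_pow_self_sub {e : ℕ} (he : e ≠ 0) (y : R) :
    y ^ 2 ∣ ((e : R) + y) ^ e - (e : R) ^ e * (1 + y) := by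
  have derivative_eq : (e : R) ^ (e - 1) * e = (e : R) ^ e := pow_sub_one_mul he _
  convert sq_dvd_add_pow_sub_sub y (e : R) e using 1
  linear_combination y * derivative_eq

theorem sq_dvd_mul_one_add_iff {p y : R} (hpy : p ∣ y) (a : R) :
    p ^ 2 ∣ a * (1 + y) ↔ p ^ 2 ∣ a := by
  obtain ⟨k, rfl⟩ := hpy
  have coprime : IsCoprime (p ^ 2) (1 + p * k) :=
    (isCoprime_one_right.add_mul_left_right k).pow_left
  exact ⟨coprime.dvd_of_dvd_mul_right, fun h => h.mul_right _⟩

theorem off_by_p_general {p r : R} {m n : ℕ} (ℓ : R) (hmn : m < n) (hrn : p ∣ r - n) :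
    p ^ 2 ∣ r ^ n + ℓ * (r - m) ^ (n - m) ↔
      p ^ 2 ∣ (n : R) ^ n + ℓ * ((n : R) - m) ^ (n - m) := by
  obtain ⟨y, rfl⟩ : ∃ y, r = n + y := ⟨r - n, by ring⟩
  have hpy : p ∣ y := by simpa using hrn
  have expand_n : p ^ 2 ∣ ((n : R) + y) ^ n - (n : R) ^ n * (1 + y) :=
    (pow_dvd_pow_of_dvd hpy 2).trans (sq_dvd_natCast_add_pow_self_sub (Nat.ne_zero_of_lt hmn) y)
  have expand_sub : p ^ 2 ∣
      ((n : R) + y - m) ^ (n - m) - ((n : R) - m) ^ (n - m) * (1 + y) := by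
    have := sq_dvd_natCast_add_pow_self_sub (Nat.sub_ne_zero_of_lt hmn) y
    rw [Nat.cast_sub hmn.le, sub_add_eq_add_sub] at this
    exact (pow_dvd_pow_of_dvd hpy 2).trans this
  have expand_sum : p ^ 2 ∣ ((n : R) + y) ^ n + ℓ * ((n : R) + y - m) ^ (n - m) -
      ((n : R) ^ n + ℓ * ((n : R) - m) ^ (n - m)) * (1 + y) := by
    convert expand_n.add (expand_sub.mul_left ℓ) using 1
    ring
  rw [dvd_iff_dvd_of_dvd_sub expand_sum, sq_dvd_mul_one_add_iff hpy]

end CommRing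

/-- Let `p` be a prime, let `m < n` be positive integers, `ℓ` an integer, and let
`r` be a positive integer with `r ≡ n (mod p)` and `r > m`.  Then `p²` divides
`r^n + ℓ·(r−m)^(n−m)` if and only if `p²` divides `n^n + ℓ·(n−m)^(n−m)`. -/
theorem off_by_p (p : ℕ) (hp : p.Prime) (m n : ℕ) (ℓ : ℤ)
    (hm : 0 < m) (hmn : m < n) (r : ℕ) (hr : 0 < r)
    (hrn : (r : ℤ) ≡ (n : ℤ) [ZMOD (p : ℤ)]) (hrm : m < r) :
    ((p : ℤ) ^ 2 ∣ (r : ℤ) ^ n + ℓ * ((r : ℤ) - (m : ℤ)) ^ (n - m)) ↔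
      ((p : ℤ) ^ 2 ∣ (n : ℤ) ^ n + ℓ * ((n : ℤ) - (m : ℤ)) ^ (n - m)) :=
  off_by_p_general ℓ hmn hrn.symm.dvd
end

section
/- Let p be a prime, let ε ∈ {−1,1}, and let m and n be positive integers with m < n, p ∤ m, p ∤ n, and p² ∣ D_ε(n,m). Let k be any integer with k ≡ m − n (mod p(p−1)), and let x be any integer with x ≡ 1 − m·n⁻¹ (mod p), where n⁻¹ denotes an inverse of n modulo p². Then x^k ≡ −ε·(1−x)^m (mod p²) (where, if k is negative, x^k denotes x^(k + t·p(p−1)) for t large enough to make the exponent positive; this is well defined since x is invertible modulo p²). -/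
section CommRing

variable {R : Type*} [CommRing R]

theorem natCast_add_pow_self_of_sq_eq_zero {a : ℕ} (ha : a ≠ 0) {q : R} (hq : q ^ 2 = 0) :
    (a + q) ^ a = a ^ a * (1 + q) := by
  have taylor : (a + q) ^ a = a ^ a + a * a ^ (a - 1) * q := by
    simpa [Polynomial.derivative_X_pow] using
      (Polynomial.X ^ a : Polynomial R).eval_add_of_sq_eq_zero (a : R) q hq
  rw [taylor, mul_pow_sub_one ha, mul_one_add]

-- The critical point of the header with denominators cleared: for `q = (a + m) * x - a` the two
-- bases are `(a + m) * x` and `(a + m) * (1 - x)`.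
theorem natCast_add_pow_mul_natCast_sub_pow_of_sq_eq_zero {a m : ℕ} (ha : a ≠ 0) (hm : m ≠ 0)
    {q : R} (hq : q ^ 2 = 0) :
    (a + q) ^ a * (m - q) ^ m = a ^ a * m ^ m := by
  have hq' : (-q) ^ 2 = 0 := by rw [neg_sq, hq]
  rw [sub_eq_add_neg, natCast_add_pow_self_of_sq_eq_zero ha hq,
    natCast_add_pow_self_of_sq_eq_zero hm hq']
  linear_combination -(a : R) ^ a * (m : R) ^ m * hq

theorem intCast_trinomialD (ε : ℤ) (n m : ℕ) :
    (trinomialD ε n m : R) = n ^ n + ε * ((n - m : ℕ) : R) ^ (n - m) * m ^ m := by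
  simp [trinomialD]

theorem natCast_pow_self_mul_pow_mul_one_sub_pow {m n : ℕ} (hm : 0 < m) (hmn : m < n) {x : R}
    (hx : (n * x - (n - m : ℕ)) ^ 2 = 0) :
    (n : R) ^ n * (x ^ (n - m) * (1 - x) ^ m) = ((n - m : ℕ) : R) ^ (n - m) * m ^ m := by
  rw [← natCast_add_pow_mul_natCast_sub_pow_of_sq_eq_zero (Nat.sub_ne_zero_of_lt hmn) hm.ne' hx,
    add_sub_cancel]
  have one_sub : (m : R) - (n * x - (n - m : ℕ)) = n * (1 - x) := by
    rw [Nat.cast_sub hmn.le]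
    ring
  rw [one_sub, mul_pow, mul_pow, mul_mul_mul_comm, pow_sub_mul_pow _ hmn.le]

theorem neg_mul_one_sub_pow_mul_pow_eq_one {ε : ℤ} {m n : ℕ} (hm : 0 < m) (hmn : m < n)
    (hn : IsUnit (n : R)) (hD : (trinomialD ε n m : R) = 0) {x : R}
    (hx : (n * x - (n - m : ℕ)) ^ 2 = 0) :
    -ε * (1 - x) ^ m * x ^ (n - m) = 1 := by
  rw [intCast_trinomialD] at hD
  refine (hn.pow n).mul_left_cancel ?_
  linear_combination -(ε : R) * natCast_pow_self_mul_pow_mul_one_sub_pow hm hmn hx - hD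

end CommRing

theorem zmod_pow_eq_one_of_totient_dvd {N k : ℕ} {x : ZMod N} (hx : IsUnit x)
    (hk : N.totient ∣ k) : x ^ k = 1 := by
  obtain ⟨u, rfl⟩ := hx
  obtain ⟨t, rfl⟩ := hk
  rw [← Units.val_pow_eq_pow_val, pow_mul, ZMod.pow_totient, one_pow, Units.val_one]

theorem zmod_pow_eq_of_mul_pow_eq_one {N a k : ℕ} {x y : ZMod N} (ha : a ≠ 0)
    (hxy : y * x ^ a = 1) (hk : N.totient ∣ k + a) : x ^ k = y := by
  have x_unit : IsUnit x := (isUnit_pow_iff ha).mp (.of_mul_eq_one_right y hxy)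
  calc x ^ k = y * x ^ a * x ^ k := by rw [hxy, one_mul]
    _ = y * x ^ (k + a) := by ring
    _ = y := by rw [zmod_pow_eq_one_of_totient_dvd x_unit hk, mul_one]

theorem isUnit_natCast_zmod_pow_of_mul_modEq_one {M n : ℕ} {ninv : ℤ}
    (hninv : n * ninv ≡ 1 [ZMOD M]) (e : ℕ) : IsUnit (n : ZMod (M ^ e)) := by
  obtain ⟨u, hu⟩ := hninv.dvd
  have coprime : IsCoprime (n : ℤ) M := ⟨ninv, u, by linear_combination -hu⟩
  exact (ZMod.isUnit_iff_coprime n _).mpr ((Nat.isCoprime_iff_coprime.mp coprime).pow_right e)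

theorem mul_modEq_sub_of_modEq_one_sub_mul {M m n ninv x : ℤ} (hninv : n * ninv ≡ 1 [ZMOD M])
    (hx : x ≡ 1 - m * ninv [ZMOD M]) : n * x ≡ n - m [ZMOD M] :=
  calc n * x ≡ n * (1 - m * ninv) [ZMOD M] := hx.mul_left n
    _ = n - m * (n * ninv) := by ring
    _ ≡ n - m * 1 [ZMOD M] := (hninv.mul_left m).sub_left n
    _ = n - m := by rw [mul_one]

theorem any_x_works_general (M : ℕ) (ε : ℤ) (m n : ℕ) (hm : 0 < m) (hmn : m < n)
    (hD : (M : ℤ) ^ 2 ∣ trinomialD ε n m)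
    (k : ℕ) (hk : (k : ℤ) ≡ (m : ℤ) - (n : ℤ) [ZMOD (M ^ 2).totient])
    (ninv : ℤ) (hninv : (n : ℤ) * ninv ≡ 1 [ZMOD M])
    (x : ℤ) (hx : x ≡ 1 - (m : ℤ) * ninv [ZMOD M]) :
    x ^ k ≡ -ε * (1 - x) ^ m [ZMOD ((M : ℤ) ^ 2)] := by
  have D_zero : (trinomialD ε n m : ZMod (M ^ 2)) = 0 :=
    (ZMod.intCast_zmod_eq_zero_iff_dvd _ _).mpr (by exact_mod_cast hD)
  have near_critical : (n * x - (n - m : ℕ) : ZMod (M ^ 2)) ^ 2 = 0 := by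
    have dvd : (M : ℤ) ∣ n * x - (n - m : ℕ) := by
      rw [Nat.cast_sub hmn.le]
      exact (mul_modEq_sub_of_modEq_one_sub_mul hninv hx).symm.dvd
    exact_mod_cast (ZMod.intCast_zmod_eq_zero_iff_dvd _ (M ^ 2)).mpr
      (by exact_mod_cast pow_dvd_pow_of_dvd dvd 2)
  have totient_dvd : (M ^ 2).totient ∣ k + (n - m) := by
    zify [hmn.le]
    convert hk.symm.dvd using 1
    ring
  have key := zmod_pow_eq_of_mul_pow_eq_one (Nat.sub_ne_zero_of_lt hmn)
    (neg_mul_one_sub_pow_mul_pow_eq_one hm hmn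
      (isUnit_natCast_zmod_pow_of_mul_modEq_one hninv 2) D_zero near_critical) totient_dvd
  exact_mod_cast (ZMod.intCast_eq_intCast_iff _ _ (M ^ 2)).mp (by exact_mod_cast key)

/-- Suppose `p² ∣ D_ε(n,m)` with `p ∤ m`, `p ∤ n`.  If `k ≡ m − n (mod p(p−1))`
(`k` a nonnegative representative) and `x ≡ 1 − m·n⁻¹ (mod p)`, where `n⁻¹` is an
inverse of `n` modulo `p²`, then `x^k ≡ −ε·(1−x)^m (mod p²)`. -/
theorem any_x_works (p : ℕ) (hp : p.Prime) (ε : ℤ) (hε : ε = 1 ∨ ε = -1)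
    (m n : ℕ) (hm : 0 < m) (hmn : m < n)
    (hpm : ¬ (p : ℤ) ∣ (m : ℤ)) (hpn : ¬ (p : ℤ) ∣ (n : ℤ))
    (hD : (p : ℤ) ^ 2 ∣ trinomialD ε n m)
    (k : ℕ) (hk : (k : ℤ) ≡ (m : ℤ) - (n : ℤ) [ZMOD ((p : ℤ) * ((p : ℤ) - 1))])
    (ninv : ℤ) (hninv : (n : ℤ) * ninv ≡ 1 [ZMOD ((p : ℤ) ^ 2)])
    (x : ℤ) (hx : x ≡ 1 - (m : ℤ) * ninv [ZMOD (p : ℤ)]) :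
    x ^ k ≡ -ε * (1 - x) ^ m [ZMOD ((p : ℤ) ^ 2)] := by
  have totient_sq : ((p ^ 2).totient : ℤ) = p * (p - 1) := by
    simp [Nat.totient_prime_pow_succ hp 1, hp.one_le]
  exact any_x_works_general p ε m n hm hmn hD k (totient_sq ▸ hk) ninv
    (hninv.of_dvd (dvd_pow_self _ two_ne_zero)) x hx
end

section
/- Let p be an odd prime, let ε ∈ {−1,1}, and let k and m be positive integers. Suppose x is an integer that is a nonzero p-th power modulo p² and satisfies x^k ≡ −ε·(1−x)^m (mod p²). Let u be an integer with u(1−x) ≡ 1 (mod p²), and let n be any positive integer with n > m and n ≡ (m−k)p − m·u·(p−1) (mod p(p−1)). Then p² divides D_ε(n,m). -/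
/-!
For a positive integer `b` and any `y`, `b ^ b ≡ y ^ b * (1 + (b - y))` modulo `(b - y) ^ 2`.
Split `n` as `n * x + n * (1 - x)` and compare the two parts with `n - m` and `m`: the errors are
`-q` and `q`, so the correction factors `1 - q` and `1 + q` cancel modulo `q ^ 2`, and `D_ε(n, m)`
becomes `n ^ n * (1 + ε * x ^ (n - m) * (1 - x) ^ m)`. The congruence for `n` modulo `p` makes `q`
divisible by `p`. Its congruence modulo `p - 1`, together with `x ^ (p - 1) ≡ 1` and the equation
for `x ^ k`, makes the second factor vanish modulo `p ^ 2`.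

For prime `p`, Fermat's congruence `a ^ (p - 1) ≡ 1` modulo `p` lifts under `p`-th powers to
`(a ^ p) ^ (p - 1) ≡ 1` modulo `p ^ 2`, which provides `x ^ (p - 1) ≡ 1`.
-/

theorem sq_natCast_sub_dvd_pow_self_sub {R : Type*} [CommRing R] {b : ℕ} (hb : b ≠ 0) (y : R) :
    ((b : R) - y) ^ 2 ∣ (b : R) ^ b - y ^ b * (1 + ((b : R) - y)) := by
  obtain ⟨c, hc⟩ := Polynomial.powAddExpansion y ((b : R) - y) b
  rw [add_sub_cancel] at hc
  have hy : y ^ b = y * y ^ (b - 1) := (mul_pow_sub_one hb y).symm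
  exact ⟨y ^ (b - 1) + c, by linear_combination hc - ((b : R) - y) * hy⟩

theorem sq_natCast_sub_dvd_pow_self_mul_pow_self_sub {R : Type*} [CommRing R] {a b : ℕ}
    (ha : a ≠ 0) (hb : b ≠ 0) {y z : R} (h : (a : R) + b = y + z) :
    ((b : R) - z) ^ 2 ∣ (a : R) ^ a * (b : R) ^ b - y ^ a * z ^ b := by
  have hq : (a : R) - y = -((b : R) - z) := by linear_combination h
  obtain ⟨c, hc⟩ := sq_natCast_sub_dvd_pow_self_sub ha y
  obtain ⟨d, hd⟩ := sq_natCast_sub_dvd_pow_self_sub hb z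
  rw [hq] at hc
  generalize (b : R) - z = q at hc hd ⊢
  exact ⟨c * (b : R) ^ b + y ^ a * (1 - q) * d - y ^ a * z ^ b, by
    linear_combination (b : R) ^ b * hc + y ^ a * (1 - q) * hd⟩

theorem trinomialD_modEq_s7 (ε : ℤ) {n m : ℕ} (hm : 0 < m) (hmn : m < n) {N x : ℤ}
    (h : N ∣ ((m : ℤ) - n * (1 - x)) ^ 2) :
    trinomialD ε n m ≡ (n : ℤ) ^ n * (1 + ε * (x ^ (n - m) * (1 - x) ^ m)) [ZMOD N] := by
  have hsplit : ((n - m : ℕ) : ℤ) + m = n * x + n * (1 - x) := by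
    push_cast [hmn.le]
    ring
  have hdvd := sq_natCast_sub_dvd_pow_self_mul_pow_self_sub (Nat.sub_ne_zero_of_lt hmn) hm.ne'
    hsplit
  have hpow : (n : ℤ) ^ (n - m) * n ^ m = n ^ n := pow_sub_mul_pow _ hmn.le
  calc trinomialD ε n m
      = n ^ n + ε * (((n - m : ℕ) : ℤ) ^ (n - m) * m ^ m) := by rw [trinomialD, mul_assoc]
    _ ≡ n ^ n + ε * ((n * x) ^ (n - m) * (n * (1 - x)) ^ m) [ZMOD N] :=
      ((Int.modEq_of_dvd (h.trans hdvd)).symm.mul_left ε).add_left _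
    _ = n ^ n * (1 + ε * (x ^ (n - m) * (1 - x) ^ m)) := by
      rw [mul_pow, mul_pow]
      linear_combination ε * x ^ (n - m) * (1 - x) ^ m * hpow

theorem pow_sub_one_modEq_one_of_modEq_pow {p : ℕ} (hp : p.Prime) {j : ℕ} {x a : ℤ}
    (hpx : ¬ (p : ℤ) ∣ x) (hxa : x ≡ a ^ p ^ j [ZMOD (p : ℤ) ^ (j + 1)]) :
    x ^ (p - 1) ≡ 1 [ZMOD (p : ℤ) ^ (j + 1)] := by
  have hpa : ¬ (p : ℤ) ∣ a := fun hdvd => hpx <|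
    (hxa.of_dvd (dvd_pow_self _ j.succ_ne_zero)).dvd_iff.mpr
      (dvd_pow hdvd (pow_ne_zero j hp.ne_zero))
  have hfermat : a ^ (p - 1) ≡ 1 [ZMOD p] :=
    Int.ModEq.pow_card_sub_one_eq_one hp
      ((Nat.prime_iff_prime_int.mp hp).coprime_iff_not_dvd.mpr hpa).symm
  have hlift : (a ^ (p - 1)) ^ p ^ j ≡ 1 ^ p ^ j [ZMOD (p : ℤ) ^ (j + 1)] :=
    (Int.modEq_of_dvd (dvd_sub_pow_of_dvd_sub hfermat.symm.dvd j)).symm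
  calc x ^ (p - 1) ≡ (a ^ p ^ j) ^ (p - 1) [ZMOD (p : ℤ) ^ (j + 1)] := hxa.pow _
    _ = (a ^ (p - 1)) ^ p ^ j := pow_right_comm ..
    _ ≡ 1 [ZMOD (p : ℤ) ^ (j + 1)] := by rwa [one_pow] at hlift

theorem going_the_other_way_general (p : ℕ) (hp : 0 < p) (ε : ℤ) (k m : ℕ) (hm : 0 < m)
    (x : ℤ) (hx : x ^ (p - 1) ≡ 1 [ZMOD ((p : ℤ) ^ 2)])
    (hcong : x ^ k ≡ -ε * (1 - x) ^ m [ZMOD ((p : ℤ) ^ 2)])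
    (u : ℤ) (hu : u * (1 - x) ≡ 1 [ZMOD ((p : ℤ) ^ 2)])
    (n : ℕ) (hmn : m < n)
    (hn : (n : ℤ) ≡ ((m : ℤ) - (k : ℤ)) * p - (m : ℤ) * u * ((p : ℤ) - 1)
      [ZMOD ((p : ℤ) * ((p : ℤ) - 1))]) :
    (p : ℤ) ^ 2 ∣ trinomialD ε n m := by
  have hn_mod : (n : ℤ) ≡ m * u [ZMOD p] :=
    (hn.of_mul_right _).trans (Int.modEq_of_dvd ⟨m * u - (m - k), by ring⟩)
  have hn_mod_pred : (n : ℤ) ≡ m - k [ZMOD (p - 1)] :=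
    (hn.of_mul_left _).trans (Int.modEq_of_dvd ⟨m * u - (m - k), by ring⟩)
  have hdvd_error : (p : ℤ) ∣ m - n * (1 - x) := by
    refine Int.ModEq.dvd ?_
    calc (n : ℤ) * (1 - x) ≡ m * u * (1 - x) [ZMOD p] := hn_mod.mul_right _
      _ = m * (u * (1 - x)) := mul_assoc ..
      _ ≡ m * 1 [ZMOD p] := (hu.of_dvd (dvd_pow_self _ two_ne_zero)).mul_left _
      _ = m := mul_one _
  have hdvd_exponent : p - 1 ∣ n - m + k := by
    zify [hp, hmn.le]
    convert hn_mod_pred.symm.dvd using 1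
    ring
  have hxpow : x ^ (n - m + k) ≡ 1 [ZMOD ((p : ℤ) ^ 2)] := by
    obtain ⟨r, hr⟩ := hdvd_exponent
    simpa only [hr, pow_mul, one_pow] using hx.pow r
  have hprod : x ^ (n - m) * (-ε * (1 - x) ^ m) ≡ 1 [ZMOD ((p : ℤ) ^ 2)] :=
    (hcong.symm.mul_left _).trans (by rwa [← pow_add])
  have hfactor : (p : ℤ) ^ 2 ∣ 1 + ε * (x ^ (n - m) * (1 - x) ^ m) := by
    convert hprod.dvd using 1
    ring
  exact ((trinomialD_modEq_s7 ε hm hmn (pow_dvd_pow_of_dvd hdvd_error 2)).dvd_iff).mpr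
    (hfactor.mul_left _)

/-- Let `p` be an odd prime, `ε ∈ {−1,1}`, and `k, m` positive integers.  Suppose
`x` is a nonzero `p`-th power modulo `p²` with `x^k ≡ −ε·(1−x)^m (mod p²)`.  If
`u·(1−x) ≡ 1 (mod p²)` and `n > m` is a positive integer with
`n ≡ (m−k)p − m·u·(p−1) (mod p(p−1))`, then `p² ∣ D_ε(n,m)`. -/
theorem going_the_other_way (p : ℕ) (hp : p.Prime) (hodd : Odd p)
    (ε : ℤ) (hε : ε = 1 ∨ ε = -1) (k m : ℕ) (hk : 0 < k) (hm : 0 < m)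
    (x : ℤ) (hpx : ¬ (p : ℤ) ∣ x) (hxpow : ∃ a : ℤ, x ≡ a ^ p [ZMOD ((p : ℤ) ^ 2)])
    (hcong : x ^ k ≡ -ε * (1 - x) ^ m [ZMOD ((p : ℤ) ^ 2)])
    (u : ℤ) (hu : u * (1 - x) ≡ 1 [ZMOD ((p : ℤ) ^ 2)])
    (n : ℕ) (hmn : m < n)
    (hn : (n : ℤ) ≡ ((m : ℤ) - (k : ℤ)) * p - (m : ℤ) * u * ((p : ℤ) - 1)
      [ZMOD ((p : ℤ) * ((p : ℤ) - 1))]) :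
    (p : ℤ) ^ 2 ∣ trinomialD ε n m := by
  obtain ⟨a, hxa⟩ := hxpow
  have hx := pow_sub_one_modEq_one_of_modEq_pow hp (j := 1) hpx (by rwa [pow_one])
  exact going_the_other_way_general p hp.pos ε k m hm x hx hcong u hu n hmn hn
end

section
/- Let p be an odd prime, let ε ∈ {−1,1}, and let m and n be positive integers with m < n, p ∤ m, p ∤ n, and p² ∣ D_ε(n,m). Let x be the unique p-th power modulo p² with x ≡ 1 − m·n⁻¹ (mod p), let k ≡ m − n (mod p−1), and let u be an integer with u(1−x) ≡ 1 (mod p²). Then (m−k)p − m·u·(p−1) ≡ n (mod p(p−1)); that is, the map β_{p,m,ε} inverts the map α_{p,m,ε}. -/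
/-!
The formula for `β` is Chinese remaindering: `p` and `-(p - 1)` are Bézout multiples summing to `1`,
so `(m - k) p - m u (p - 1)` is the residue class modulo `p (p - 1)` that is `m - k` modulo `p - 1`
and `m u` modulo `p`. Both agree with `n`: the former by the choice of `k`, the latter because
`n` and `m (1 - x)⁻¹` are both inverse to `n⁻¹` modulo `p`.
-/

theorem modEq_of_mul_modEq_one {q a b c : ℤ} (hba : b * a ≡ 1 [ZMOD q])
    (hac : a * c ≡ 1 [ZMOD q]) : b ≡ c [ZMOD q] :=
  calc
    b = b * 1 := (mul_one b).symm
    _ ≡ b * (a * c) [ZMOD q] := hac.symm.mul_left b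
    _ = b * a * c := (mul_assoc b a c).symm
    _ ≡ 1 * c [ZMOD q] := hba.mul_right c
    _ = c := one_mul c

theorem bezout_combination_modEq {q r s t a b c : ℤ} (hbezout : s * q + t * r = 1)
    (ha : a ≡ c [ZMOD r]) (hb : b ≡ c [ZMOD q]) :
    a * (s * q) + b * (t * r) ≡ c [ZMOD q * r] := by
  have ha' : a * s * q ≡ c * s * q [ZMOD q * r] := by
    simpa only [mul_comm] using (ha.mul_right s).mul_right' (c := q)
  have hb' : b * t * r ≡ c * t * r [ZMOD q * r] := (hb.mul_right t).mul_right'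
  calc
    a * (s * q) + b * (t * r) = a * s * q + b * t * r := by ring
    _ ≡ c * s * q + c * t * r [ZMOD q * r] := ha'.add hb'
    _ = c * (s * q + t * r) := by ring
    _ = c := by rw [hbezout, mul_one]

theorem beta_inverts_alpha_general {p m n ninv x k u : ℤ}
    (hninv : n * ninv ≡ 1 [ZMOD p]) (hx : x ≡ 1 - m * ninv [ZMOD p])
    (hk : k ≡ m - n [ZMOD p - 1]) (hu : u * (1 - x) ≡ 1 [ZMOD p]) :
    (m - k) * p - m * u * (p - 1) ≡ n [ZMOD p * (p - 1)] := by
  have hmk : m - k ≡ n [ZMOD p - 1] := by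
    simpa only [sub_sub_cancel] using hk.sub_left m
  have hmninv : m * ninv ≡ 1 - x [ZMOD p] := by
    simpa only [sub_sub_cancel] using (hx.sub_left 1).symm
  have hmu_inv : m * u * ninv ≡ 1 [ZMOD p] :=
    calc
      m * u * ninv = u * (m * ninv) := by ring
      _ ≡ u * (1 - x) [ZMOD p] := hmninv.mul_left u
      _ ≡ 1 [ZMOD p] := hu
  have hmu : m * u ≡ n [ZMOD p] :=
    modEq_of_mul_modEq_one hmu_inv (by rwa [mul_comm])
  calc
    (m - k) * p - m * u * (p - 1) = (m - k) * (1 * p) + m * u * (-1 * (p - 1)) := by ring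
    _ ≡ n [ZMOD p * (p - 1)] := bezout_combination_modEq (by ring) hmk hmu

/-- Let `p` be an odd prime and suppose `p² ∣ D_ε(n,m)` with `p ∤ m`, `p ∤ n`.
Let `x` be the unique `p`-th power modulo `p²` (equivalently, `x^(p−1) ≡ 1 (mod p²)`)
with `x ≡ 1 − m·n⁻¹ (mod p)`, let `k ≡ m − n (mod p−1)`, and let `u` satisfy
`u·(1−x) ≡ 1 (mod p²)`.  Then `(m−k)p − m·u·(p−1) ≡ n (mod p(p−1))`;
that is, `β_{p,m,ε}` inverts `α_{p,m,ε}`. -/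
theorem beta_inverts_alpha (p : ℕ) (hp : p.Prime) (hodd : Odd p)
    (ε : ℤ) (hε : ε = 1 ∨ ε = -1)
    (m n : ℕ) (hm : 0 < m) (hmn : m < n)
    (hpm : ¬ (p : ℤ) ∣ (m : ℤ)) (hpn : ¬ (p : ℤ) ∣ (n : ℤ))
    (hD : (p : ℤ) ^ 2 ∣ trinomialD ε n m)
    (ninv : ℤ) (hninv : (n : ℤ) * ninv ≡ 1 [ZMOD ((p : ℤ) ^ 2)])
    (x : ℤ) (hxpow : x ^ (p - 1) ≡ 1 [ZMOD ((p : ℤ) ^ 2)])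
    (hx : x ≡ 1 - (m : ℤ) * ninv [ZMOD (p : ℤ)])
    (k : ℤ) (hk : k ≡ (m : ℤ) - (n : ℤ) [ZMOD ((p : ℤ) - 1)])
    (u : ℤ) (hu : u * (1 - x) ≡ 1 [ZMOD ((p : ℤ) ^ 2)]) :
    ((m : ℤ) - k) * p - (m : ℤ) * u * ((p : ℤ) - 1) ≡ (n : ℤ)
      [ZMOD ((p : ℤ) * ((p : ℤ) - 1))] := by
  have hp_sq : (p : ℤ) ∣ (p : ℤ) ^ 2 := dvd_pow_self _ two_ne_zero
  exact beta_inverts_alpha_general (hninv.of_dvd hp_sq) hx hk (hu.of_dvd hp_sq)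
end

section
/- Let p be a prime in 𝒫_cons. Then there exists an integer x such that x and 1 − x are both nonzero p-th powers modulo p² and the multiplicative order of 1 − x modulo p² is even. -/
/-!
For odd `p`, the nonzero `p`-th powers modulo `p²` form a group of units containing `-1`. If `x` and
`y = x + 1` lie in such a group `H`, then each of `y`, `-x` and `y / x` is one minus an element of
`H`, namely of `-x`, `y` and `-1 / x` respectively. Their orders cannot all be odd, since
`-1 = y / (-x · (y / x))` has order two.
-/

theorem odd_orderOf_mul {M : Type*} [Monoid M] {a b : M} (hab : Commute a b)
    (ha : Odd (orderOf a)) (hb : Odd (orderOf b)) : Odd (orderOf (a * b)) :=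
  (ha.mul hb).of_dvd_nat hab.orderOf_mul_dvd_mul_orderOf

-- `orderOf v = 0` when `v` has infinite order, so this case is allowed by `¬ Odd (orderOf v)`.
theorem finicky_sign_solution_general {R : Type*} [CommRing R] (hR : (-1 : R) ≠ 1)
    {H : Subgroup Rˣ} (hH : -1 ∈ H) {x y : Rˣ} (hx : x ∈ H) (hy : y ∈ H)
    (hxy : (y : R) = x + 1) :
    ∃ u ∈ H, ∃ v ∈ H, (u : R) + v = 1 ∧ ¬ Odd (orderOf v) := by
  have neg_mem {u : Rˣ} (hu : u ∈ H) : -u ∈ H := by simpa using mul_mem hH hu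
  by_contra! hodd
  have hy_odd : Odd (orderOf y) := hodd (-x) (neg_mem hx) y hy (by simp [hxy])
  have hx_odd : Odd (orderOf (-x)) := hodd y hy (-x) (neg_mem hx) (by simp [hxy])
  have hyx_odd : Odd (orderOf (y * x⁻¹)) :=
    hodd (-x⁻¹) (neg_mem (inv_mem hx)) (y * x⁻¹) (mul_mem hy (inv_mem hx))
      (by simp [hxy, add_mul])
  have neg_one_eq : (-1 : Rˣ) = y * (-x * (y * x⁻¹))⁻¹ := by
    simp [mul_comm]
  have neg_one_odd : Odd (orderOf (-1 : Rˣ)) := by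
    rw [neg_one_eq]
    refine odd_orderOf_mul (.all _ _) hy_odd ?_
    rw [orderOf_inv]
    exact odd_orderOf_mul (.all _ _) hx_odd hyx_odd
  have neg_one_order : orderOf (-1 : Rˣ) = 2 :=
    orderOf_eq_prime neg_one_sq fun h => hR (by simpa using congrArg Units.val h)
  exact absurd (neg_one_order ▸ neg_one_odd) (by decide)

theorem odd_of_not_dvd_of_modEq_add_one {p : ℕ} (hp : p.Prime) {x y : ℤ} (hx : ¬ (p : ℤ) ∣ x)
    (hy : ¬ (p : ℤ) ∣ y) (hxy : y ≡ x + 1 [ZMOD p]) : Odd p := by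
  refine hp.odd_of_ne_two ?_
  rintro rfl
  unfold Int.ModEq at hxy
  lia

theorem isUnit_intCast_zmod_prime_pow_iff {p n : ℕ} (hp : p.Prime) (hn : n ≠ 0) {x : ℤ} :
    IsUnit (x : ZMod (p ^ n)) ↔ ¬ (p : ℤ) ∣ x := by
  rw [ZMod.coe_int_isUnit_iff_isCoprime, Nat.cast_pow, IsCoprime.pow_left_iff hn.bot_lt,
    (Nat.prime_iff_prime_int.mp hp).coprime_iff_not_dvd]

theorem isNonzeroPthPower_iff_s9 {p : ℕ} (hp : p.Prime) {x : ℤ} :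
    IsNonzeroPthPower p x ↔
      ∃ u ∈ (powMonoidHom p : (ZMod (p ^ 2))ˣ →* (ZMod (p ^ 2))ˣ).range,
        (u : ZMod (p ^ 2)) = x := by
  have modEq_iff (a : ℤ) : x ≡ a ^ p [ZMOD (p : ℤ) ^ 2] ↔ (x : ZMod (p ^ 2)) = a ^ p := by
    rw [← Int.cast_pow, ZMod.intCast_eq_intCast_iff, Nat.cast_pow]
  simp only [IsNonzeroPthPower, modEq_iff, ← isUnit_intCast_zmod_prime_pow_iff hp two_ne_zero]
  constructor
  · rintro ⟨hx, a, ha⟩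
    obtain ⟨b, hb⟩ : IsUnit (a : ZMod (p ^ 2)) := (isUnit_pow_iff hp.ne_zero).mp (ha ▸ hx)
    exact ⟨b ^ p, ⟨b, rfl⟩, by simp [hb, ha]⟩
  · rintro ⟨_, ⟨b, rfl⟩, hx⟩
    obtain ⟨a, ha⟩ := ZMod.intCast_surjective (b : ZMod (p ^ 2))
    exact ⟨hx ▸ Units.isUnit _, a, by simp [← hx, ha]⟩

/-- If `p ∈ 𝒫_cons` (there exist consecutive nonzero `p`-th powers modulo `p²`),
then there exists an integer `x` such that `x` and `1 − x` are both nonzero `p`-th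
powers modulo `p²` and the multiplicative order of `1 − x` modulo `p²` is even. -/
theorem finicky_sign_solution (p : ℕ) (hp : p.Prime)
    (hcons : ∃ x y : ℤ, IsNonzeroPthPower p x ∧ IsNonzeroPthPower p y ∧
      y ≡ x + 1 [ZMOD ((p : ℤ) ^ 2)]) :
    ∃ x : ℤ, IsNonzeroPthPower p x ∧ IsNonzeroPthPower p (1 - x) ∧
      Even (orderOf (((1 - x : ℤ) : ZMod (p ^ 2)))) := by
  obtain ⟨x, y, hx, hy, hxy⟩ := hcons
  have hodd : Odd p :=
    odd_of_not_dvd_of_modEq_add_one hp hx.1 hy.1 (hxy.of_dvd (dvd_pow_self _ two_ne_zero))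
  have : Fact (2 < p ^ 2) := ⟨by nlinarith [hp.two_le]⟩
  have neg_one_mem : -1 ∈ (powMonoidHom p : (ZMod (p ^ 2))ˣ →* (ZMod (p ^ 2))ˣ).range :=
    ⟨-1, hodd.neg_one_pow⟩
  obtain ⟨a, ha, hax⟩ := (isNonzeroPthPower_iff_s9 hp).mp hx
  obtain ⟨b, hb, hby⟩ := (isNonzeroPthPower_iff_s9 hp).mp hy
  have hba : (b : ZMod (p ^ 2)) = a + 1 := by
    rw [hax, hby]
    exact_mod_cast (ZMod.intCast_eq_intCast_iff y (x + 1) (p ^ 2)).mpr (mod_cast hxy)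
  obtain ⟨u, hu, v, hv, huv, hv_order⟩ :=
    finicky_sign_solution_general ZMod.neg_one_ne_one neg_one_mem ha hb hba
  obtain ⟨z, hz⟩ := ZMod.intCast_surjective (u : ZMod (p ^ 2))
  have hvz : (v : ZMod (p ^ 2)) = (1 - z : ℤ) := by
    rw [Int.cast_sub, Int.cast_one, hz, ← huv, add_sub_cancel_left]
  refine ⟨z, (isNonzeroPthPower_iff_s9 hp).mpr ⟨u, hu, hz.symm⟩,
    (isNonzeroPthPower_iff_s9 hp).mpr ⟨v, hv, hvz⟩, ?_⟩
  rwa [← hvz, orderOf_units, ← Nat.not_odd_iff_even]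
end

section
/- Let p ≡ 1 (mod 6) be a prime with p > 3, and let x be an integer whose multiplicative order modulo p² equals 6. Then x − 1 has multiplicative order 3 modulo p², and both x and x − 1 are nonzero p-th powers modulo p². -/
/-!
If `x` has order `6` modulo `p²` with `p ∤ 6`, then `x ^ d - 1` is invertible for `d = 1, 2, 3`:
an element congruent to `1` modulo `p` has `p`-power order. Cancelling these factors from
`x ^ 6 - 1 = 0` leaves `Φ₆(x) = x ^ 2 - x + 1 = 0`. Hence `x - 1 = x ^ 2` has order `3`. Both orders
divide `p - 1`, and `y ^ (p - 1) = 1` exhibits `y = y ^ p` as a `p`-th power.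
-/

open Polynomial

theorem isRoot_cyclotomic_of_isUnit_pow_sub_one {R : Type*} [CommRing R] {n : ℕ} (hn : 0 < n)
    {x : R} (hx : x ^ n = 1) (hunit : ∀ d ∈ n.properDivisors, IsUnit (x ^ d - 1)) :
    (cyclotomic n R).IsRoot x := by
  have hfactor : cyclotomic n R * ∏ d ∈ n.properDivisors, cyclotomic d R = X ^ n - 1 := by
    rw [← prod_cyclotomic_eq_X_pow_sub_one hn, ← Nat.cons_self_properDivisors hn.ne',
      Finset.prod_cons]
  have heval : (cyclotomic n R).eval x * ∏ d ∈ n.properDivisors, (cyclotomic d R).eval x = 0 := by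
    simpa [eval_prod, hx] using congr_arg (eval x) hfactor
  have hproper : IsUnit (∏ d ∈ n.properDivisors, (cyclotomic d R).eval x) := by
    refine IsUnit.prod_iff.mpr fun d hd ↦ isUnit_of_dvd_unit ?_ (hunit d hd)
    simpa using eval_dvd (x := x) (cyclotomic.dvd_X_pow_sub_one d R)
  exact hproper.mul_left_eq_zero.mp heval

theorem isRoot_cyclotomic_orderOf_of_coprime {p k : ℕ} [Fact p.Prime] {x : ZMod (p ^ k)}
    (hx : (orderOf x).Coprime p) : (cyclotomic (orderOf x) (ZMod (p ^ k))).IsRoot x := by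
  have hpos : 0 < orderOf x := by
    refine Nat.pos_of_ne_zero fun h ↦ (Fact.out : p.Prime).ne_one ?_
    rwa [h, Nat.coprime_zero_left] at hx
  refine isRoot_cyclotomic_of_isUnit_pow_sub_one hpos (pow_orderOf_eq_one x) fun d hd ↦ ?_
  obtain ⟨hdvd, hlt⟩ := Nat.mem_properDivisors.mp hd
  have hcop : (orderOf (x ^ d)).Coprime (p ^ k) :=
    (hx.coprime_dvd_left (orderOf_pow_dvd d)).pow_right k
  have hne : x ^ d ≠ 1 := pow_ne_one_of_lt_orderOf (Nat.pos_of_dvd_of_pos hdvd hpos).ne' hlt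
  exact (ZMod.eq_one_or_isUnit_sub_one rfl (x ^ d) hcop).resolve_left hne

theorem sub_one_eq_sq_of_isRoot_cyclotomic_six {R : Type*} [Ring R] {x : R}
    (hx : (cyclotomic 6 R).IsRoot x) : x - 1 = x ^ 2 := by
  have hroot : x ^ 2 - x + 1 = 0 := by simpa [cyclotomic_six, eval_X_pow] using hx
  rw [← sub_eq_zero, ← neg_eq_zero, ← hroot]
  abel

theorem isNonzeroPthPower_of_pow_sub_one_eq_one {p : ℕ} (hp : 1 < p) {x : ℤ}
    (hx : (x : ZMod (p ^ 2)) ^ (p - 1) = 1) : IsNonzeroPthPower p x := by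
  constructor
  · have hcop : IsCoprime ((p ^ 2 : ℕ) : ℤ) x :=
      (ZMod.coe_int_isUnit_iff_isCoprime x _).mp (.of_pow_eq_one hx (by lia))
    rw [Nat.cast_pow, IsCoprime.pow_left_iff two_pos] at hcop
    intro hdvd
    have hunit : IsUnit (p : ℤ) := hcop.isUnit_of_dvd' dvd_rfl hdvd
    exact hp.ne' (Nat.isUnit_iff.mp (Int.ofNat_isUnit.mp hunit))
  · refine ⟨x, ?_⟩
    rw [← Nat.cast_pow, ← ZMod.intCast_eq_intCast_iff, Int.cast_pow,
      ← pow_sub_one_mul (by lia : p ≠ 0), hx, one_mul]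

/-- Let `p ≡ 1 (mod 6)` be a prime with `p > 3`, and let `x` be an integer whose
multiplicative order modulo `p²` equals `6`.  Then `x − 1` has multiplicative
order `3` modulo `p²`, and both `x` and `x − 1` are nonzero `p`-th powers
modulo `p²`. -/
theorem sixth_and_cube_roots (p : ℕ) (hp : p.Prime) (hp6 : p % 6 = 1) (hp3 : 3 < p)
    (x : ℤ) (hx : orderOf ((x : ZMod (p ^ 2))) = 6) :
    orderOf (((x - 1 : ℤ) : ZMod (p ^ 2))) = 3 ∧
      IsNonzeroPthPower p x ∧ IsNonzeroPthPower p (x - 1) := by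
  have : Fact p.Prime := ⟨hp⟩
  have hcop : Nat.Coprime 6 p := by rw [Nat.Coprime, Nat.gcd_rec, hp6, Nat.gcd_one_left]
  have hroot : (cyclotomic 6 (ZMod (p ^ 2))).IsRoot (x : ZMod (p ^ 2)) :=
    hx ▸ isRoot_cyclotomic_orderOf_of_coprime (hx.symm ▸ hcop)
  have hsq : ((x - 1 : ℤ) : ZMod (p ^ 2)) = (x : ZMod (p ^ 2)) ^ 2 := by
    rw [Int.cast_sub, Int.cast_one, sub_one_eq_sq_of_isRoot_cyclotomic_six hroot]
  have hthree : orderOf ((x - 1 : ℤ) : ZMod (p ^ 2)) = 3 := by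
    rw [hsq, orderOf_pow' _ two_ne_zero, hx]
    rfl
  have hpower (y : ℤ) (hy : orderOf (y : ZMod (p ^ 2)) ∣ p - 1) : IsNonzeroPthPower p y :=
    isNonzeroPthPower_of_pow_sub_one_eq_one hp.one_lt (orderOf_dvd_iff_pow_eq_one.mp hy)
  exact ⟨hthree, hpower x (by rw [hx]; lia), hpower (x - 1) (by rw [hthree]; lia)⟩
end

section
/- Let p be an odd prime and let x be an integer with f_p(x) ≡ 0 (mod p). Then f_p(−x−1) ≡ 0 (mod p). Moreover, if p ∤ x and x′ is any integer with x·x′ ≡ 1 (mod p), then f_p(x′) ≡ 0 (mod p). -/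
/-- The value at `x` of the integer polynomial `f_p(X) = ((X+1)^p − X^p − 1)/p`
(the integer division is exact by Fermat's little theorem). -/
def fpVal (p : ℕ) (x : ℤ) : ℤ := ((x + 1) ^ p - x ^ p - 1) / (p : ℤ)

/-!
The first congruence is an equality: for odd `p`, substituting `-x - 1` for `x` permutes the terms
of `(x + 1) ^ p - x ^ p - 1`. For the second, raising to the `p`-th power lifts a congruence modulo
`p` to one modulo `p ^ 2`, so `x * x' ≡ 1` modulo `p` lets `x' ^ p` carry `(x + 1) ^ p - x ^ p - 1`
to `(x' + 1) ^ p - x' ^ p - 1` modulo `p ^ 2`. Dividing by `p` and using `x' ^ p ≡ x'` gives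
`f_p(x') ≡ x' * f_p(x)` modulo `p`.
-/

theorem mul_fpVal {p : ℕ} (hp : p.Prime) (x : ℤ) :
    (p : ℤ) * fpVal p x = (x + 1) ^ p - x ^ p - 1 := by
  have fermat : (x + 1) ^ p - x ^ p - 1 ≡ (x + 1) - x - 1 [ZMOD p] :=
    ((Int.ModEq.pow_prime_eq_self hp (x + 1)).sub (Int.ModEq.pow_prime_eq_self hp x)).sub_right 1
  refine Int.mul_ediv_cancel' (Int.modEq_zero_iff_dvd.mp (fermat.trans ?_))
  rw [add_sub_cancel_left, sub_self]

theorem fpVal_neg_sub_one {p : ℕ} (hodd : Odd p) (x : ℤ) : fpVal p (-x - 1) = fpVal p x := by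
  have neg_x : (-x - 1 + 1) ^ p = -x ^ p := by rw [sub_add_cancel, hodd.neg_pow]
  have neg_x_sub_one : (-x - 1) ^ p = -(x + 1) ^ p := by rw [← neg_add', hodd.neg_pow]
  rw [fpVal, fpVal, neg_x, neg_x_sub_one]
  congr 1
  ring

theorem pow_self_modEq_sq {n : ℕ} {a b : ℤ} (h : a ≡ b [ZMOD n]) :
    a ^ n ≡ b ^ n [ZMOD (n : ℤ) ^ 2] := by
  have lifted : (n : ℤ) ^ (1 + 1) ∣ b ^ n ^ 1 - a ^ n ^ 1 := dvd_sub_pow_of_dvd_sub h.dvd 1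
  rw [pow_one] at lifted
  exact Int.modEq_of_dvd lifted

theorem add_one_pow_sub_pow_sub_one_modEq_sq {n : ℕ} {x x' : ℤ} (h : x * x' ≡ 1 [ZMOD n]) :
    (x' + 1) ^ n - x' ^ n - 1 ≡ x' ^ n * ((x + 1) ^ n - x ^ n - 1) [ZMOD (n : ℤ) ^ 2] := by
  have inverse_pow : (x * x') ^ n ≡ 1 [ZMOD (n : ℤ) ^ 2] := by
    simpa only [one_pow] using pow_self_modEq_sq h
  have shifted_pow : (x * x' + x') ^ n ≡ (1 + x') ^ n [ZMOD (n : ℤ) ^ 2] :=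
    pow_self_modEq_sq (h.add_right x')
  calc (x' + 1) ^ n - x' ^ n - 1
      = (1 + x') ^ n - 1 - x' ^ n := by ring
    _ ≡ (x * x' + x') ^ n - (x * x') ^ n - x' ^ n [ZMOD (n : ℤ) ^ 2] :=
        ((shifted_pow.sub inverse_pow).sub_right _).symm
    _ = x' ^ n * ((x + 1) ^ n - x ^ n - 1) := by
        rw [← add_one_mul, mul_pow, mul_pow]
        ring

theorem fpVal_modEq_mul_fpVal_of_mul_modEq_one {p : ℕ} (hp : p.Prime) {x x' : ℤ}
    (h : x * x' ≡ 1 [ZMOD p]) : fpVal p x' ≡ x' * fpVal p x [ZMOD p] := by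
  have hp0 : (p : ℤ) ≠ 0 := Nat.cast_ne_zero.mpr hp.ne_zero
  have scaled_by_p : (p : ℤ) * fpVal p x' ≡ p * (x' ^ p * fpVal p x) [ZMOD p * p] := by
    rw [mul_left_comm, mul_fpVal hp, mul_fpVal hp, ← sq]
    exact add_one_pow_sub_pow_sub_one_modEq_sq h
  calc fpVal p x'
      ≡ x' ^ p * fpVal p x [ZMOD p] := Int.ModEq.mul_left_cancel' hp0 scaled_by_p
    _ ≡ x' * fpVal p x [ZMOD p] := (Int.ModEq.pow_prime_eq_self hp x').mul_right _

/-- Let `p` be an odd prime and `x` an integer with `f_p(x) ≡ 0 (mod p)`.  Then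
`f_p(−x−1) ≡ 0 (mod p)`; moreover, if `p ∤ x` and `x·x′ ≡ 1 (mod p)`, then
`f_p(x′) ≡ 0 (mod p)`. -/
theorem orbit_multiple_roots (p : ℕ) (hp : p.Prime) (hodd : Odd p)
    (x : ℤ) (hx : fpVal p x ≡ 0 [ZMOD (p : ℤ)]) :
    fpVal p (-x - 1) ≡ 0 [ZMOD (p : ℤ)] ∧
      (¬ (p : ℤ) ∣ x → ∀ x' : ℤ, x * x' ≡ 1 [ZMOD (p : ℤ)] →
        fpVal p x' ≡ 0 [ZMOD (p : ℤ)]) := by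
  refine ⟨by rwa [fpVal_neg_sub_one hodd], fun _ x' hxx' => ?_⟩
  calc fpVal p x'
      ≡ x' * fpVal p x [ZMOD p] := fpVal_modEq_mul_fpVal_of_mul_modEq_one hp hxx'
    _ ≡ x' * 0 [ZMOD p] := hx.mul_left x'
    _ = 0 := mul_zero x'
end

section
/- Let p be an odd prime that is not a Wieferich prime (i.e., p² ∤ 2^p − 2), and let x be an element of ℤ/pℤ with x ≠ 0, x ≠ −1, and x² + x + 1 ≠ 0, such that the reduction of f_p modulo p vanishes at x. Then the six elements x, −x−1, −(x+1)⁻¹, −x·(x+1)⁻¹, −(x+1)·x⁻¹, x⁻¹ of ℤ/pℤ are pairwise distinct, and the reduction of f_p modulo p vanishes at every one of them. -/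
/-- The value at `x ∈ ℤ/pℤ` of the reduction of `f_p` modulo `p`, computed via
the canonical lift (reduction commutes with evaluation at any lift). -/
def fpBar (p : ℕ) (x : ZMod p) : ZMod p := ((fpVal p ((x.val : ℤ))) : ZMod p)

/-!
Modulo `p²`, the power `a ^ p` depends only on `a` modulo `p`, so `τ a = a ^ p` is a multiplicative
map `ℤ/pℤ → ℤ/p²ℤ`, and `x` is a root of `f_p` modulo `p` exactly when `τ (x + 1) = τ x + 1`. By
multiplicativity of `τ` and `τ (-1) = -1`, this condition is preserved by `x ↦ x⁻¹` and
`x ↦ -x - 1`. These two involutions generate a copy of `S₃` whose orbits are the sextuples of the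
theorem. Two members of the orbit of `x` can coincide only if `x` is a root of `X² + X + 1` or
`1` lies in the orbit; but `1` is a root of `f_p` modulo `p` only if `p` is a Wieferich prime.
-/

section AnharmonicOrbit

variable {K : Type*} [Field K] {x : K}

/-- The orbit of `x` under the group of Möbius transformations generated by `x ↦ -x - 1` and
`x ↦ x⁻¹`, listed with repetitions. This group is the anharmonic group of the cross-ratio in the
coordinate `-x`. It permutes `0`, `-1` and `∞`, so the entries are meaningful for `x ≠ 0, -1`. -/
def anharmonicOrbit (x : K) : List K :=
  [x, -x - 1, -(x + 1)⁻¹, -(x * (x + 1)⁻¹), -((x + 1) * x⁻¹), x⁻¹]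

theorem forall_mem_anharmonicOrbit {P : K → Prop} (hneg : ∀ y, P y → P (-y - 1))
    (hinv : ∀ y ≠ 0, P y → P y⁻¹) (h0 : x ≠ 0) (h1 : x ≠ -1) (hx : P x) :
    ∀ y ∈ anharmonicOrbit x, P y := by
  have hx1 : x + 1 ≠ 0 := fun h => h1 (eq_neg_of_add_eq_zero_left h)
  have neg_sub_one_eq : -x - 1 = -(x + 1) := by ring
  have h_neg : P (-x - 1) := hneg x hx
  have h_inv : P x⁻¹ := hinv x h0 hx
  have h_inv_neg : P (-(x + 1)⁻¹) := by
    rw [← inv_neg, ← neg_sub_one_eq]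
    exact hinv _ (neg_sub_one_eq ▸ neg_ne_zero.mpr hx1) h_neg
  have h_neg_inv_neg : P (-(x * (x + 1)⁻¹)) := by
    have heq : -(x * (x + 1)⁻¹) = -(-(x + 1)⁻¹) - 1 := by field_simp; ring
    exact heq ▸ hneg _ h_inv_neg
  have h_neg_inv : P (-((x + 1) * x⁻¹)) := by
    have heq : -((x + 1) * x⁻¹) = -x⁻¹ - 1 := by field_simp; ring
    exact heq ▸ hneg _ h_inv
  simp only [anharmonicOrbit, List.forall_mem_cons, List.not_mem_nil, false_imp_iff, implies_true,
    and_true]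
  exact ⟨hx, h_neg, h_inv_neg, h_neg_inv_neg, h_neg_inv, h_inv⟩

theorem pairwise_ne_anharmonicOrbit (h0 : x ≠ 0) (h1 : x ≠ -1) (hcube : x ^ 2 + x + 1 ≠ 0)
    (hone : 1 ∉ anharmonicOrbit x) : (anharmonicOrbit x).Pairwise (· ≠ ·) := by
  simp only [anharmonicOrbit, List.mem_cons, List.not_mem_nil, or_false, not_or] at hone
  obtain ⟨h_x, h_neg, -, -, h_neg_inv, -⟩ := hone
  have hsub_one : x - 1 ≠ 0 := fun h => h_x (sub_eq_zero.mp h).symm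
  have hadd_two : x + 2 ≠ 0 := fun h => h_neg (by linear_combination h)
  have htwo_mul : 2 * x + 1 ≠ 0 := fun h => h_neg_inv (by field_simp; linear_combination h)
  simp only [anharmonicOrbit, List.pairwise_cons, List.forall_mem_cons, List.not_mem_nil,
    false_imp_iff, implies_true, List.Pairwise.nil, and_true]
  -- Up to sign and powers of `x` and `x + 1`, the difference of any two entries is one of
  -- `x - 1`, `x + 2`, `2 * x + 1` and `x ^ 2 + x + 1`.
  and_intros <;> grind

end AnharmonicOrbit

section MonoidHom

theorem map_inv_add_one_of_map_add_one {K R : Type*} [DivisionSemiring K] [NonAssocSemiring R]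
    (τ : K →* R) {x : K} (hx : x ≠ 0) (h : τ (x + 1) = τ x + 1) : τ (x⁻¹ + 1) = τ x⁻¹ + 1 :=
  calc τ (x⁻¹ + 1) = τ (x⁻¹ * (x + 1)) := by rw [mul_add, inv_mul_cancel₀ hx, mul_one, add_comm]
    _ = τ x⁻¹ * (τ x + 1) := by rw [map_mul, h]
    _ = τ (x⁻¹ * x) + τ x⁻¹ := by rw [mul_add, map_mul, mul_one]
    _ = τ x⁻¹ + 1 := by rw [inv_mul_cancel₀ hx, map_one, add_comm]

theorem map_neg_sub_one_add_one_of_map_add_one {A R : Type*} [Ring A] [Ring R]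
    (τ : A →* R) (hτ : τ (-1) = -1) {x : A} (h : τ (x + 1) = τ x + 1) :
    τ (-x - 1 + 1) = τ (-x - 1) + 1 := by
  have hneg (y : A) : τ (-y) = -τ y := by rw [← neg_one_mul, map_mul, hτ, neg_one_mul]
  calc τ (-x - 1 + 1) = -τ x := by rw [sub_add_cancel, hneg]
    _ = -τ (x + 1) + 1 := by rw [h, neg_add, neg_add_cancel_right]
    _ = τ (-x - 1) + 1 := by rw [← hneg, neg_add']

end MonoidHom

section PowLift

variable {n : ℕ}

theorem intCast_pow_eq_of_intCast_eq {a b : ℤ} (h : (a : ZMod n) = b) :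
    (a : ZMod (n ^ 2)) ^ n = (b : ZMod (n ^ 2)) ^ n := by
  have hdvd : (n : ℤ) ∣ b - a := (ZMod.intCast_eq_intCast_iff_dvd_sub a b n).mp h
  have hpow : ((n ^ 2 : ℕ) : ℤ) ∣ b ^ n - a ^ n := by
    simpa using dvd_sub_pow_of_dvd_sub hdvd 1
  exact_mod_cast (ZMod.intCast_eq_intCast_iff_dvd_sub _ _ _).mpr hpow

/-- The multiplicative map `ℤ/nℤ → ℤ/n²ℤ` sending the class of `a` to the class of `a ^ n`,
computed via the canonical lift. For prime `n` it is the Teichmüller lift modulo `n²`. -/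
def powLift (n : ℕ) : ZMod n →* ZMod (n ^ 2) where
  toFun x := ((x.cast : ℤ) : ZMod (n ^ 2)) ^ n
  map_one' := by
    simpa using intCast_pow_eq_of_intCast_eq (n := n) (b := 1) (ZMod.intCast_zmod_cast _)
  map_mul' x y := by
    rw [← mul_pow, ← Int.cast_mul]
    exact intCast_pow_eq_of_intCast_eq (by simp)

theorem powLift_intCast (a : ℤ) : powLift n a = (a : ZMod (n ^ 2)) ^ n :=
  intCast_pow_eq_of_intCast_eq (ZMod.intCast_zmod_cast _)

theorem powLift_neg_one (hn : Odd n) : powLift n (-1) = -1 := by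
  simpa [hn.neg_one_pow] using powLift_intCast (n := n) (-1)

end PowLift

section Roots

variable {p : ℕ} [Fact p.Prime] {x : ZMod p}

theorem prime_dvd_add_one_pow_sub_pow_sub_one (a : ℤ) : (p : ℤ) ∣ (a + 1) ^ p - a ^ p - 1 := by
  rw [← ZMod.intCast_zmod_eq_zero_iff_dvd]
  push_cast
  rw [ZMod.pow_card, ZMod.pow_card, add_sub_cancel_left, sub_self]

theorem intCast_fpVal_eq_zero_iff (a : ℤ) :
    (fpVal p a : ZMod p) = 0 ↔ ((a + 1) ^ p - a ^ p - 1 : ZMod (p ^ 2)) = 0 := by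
  have hcast : ((a + 1) ^ p - a ^ p - 1 : ZMod (p ^ 2)) =
      (((a + 1) ^ p - a ^ p - 1 : ℤ) : ZMod (p ^ 2)) := by push_cast; rfl
  rw [hcast, ZMod.intCast_zmod_eq_zero_iff_dvd, ZMod.intCast_zmod_eq_zero_iff_dvd, fpVal,
    Int.dvd_div_iff_mul_dvd (prime_dvd_add_one_pow_sub_pow_sub_one a), Nat.cast_pow, sq]

theorem fpBar_eq_zero_iff : fpBar p x = 0 ↔ powLift p (x + 1) = powLift p x + 1 := by
  have hx : powLift p x = ((x.val : ℤ) : ZMod (p ^ 2)) ^ p := by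
    simpa using powLift_intCast (n := p) (x.val : ℤ)
  have hx_add_one : powLift p (x + 1) = (((x.val : ℤ) : ZMod (p ^ 2)) + 1) ^ p := by
    simpa using powLift_intCast (n := p) ((x.val : ℤ) + 1)
  rw [fpBar, intCast_fpVal_eq_zero_iff, hx, hx_add_one, sub_sub, sub_eq_zero]

theorem fpBar_neg_sub_one (hodd : Odd p) (h : fpBar p x = 0) : fpBar p (-x - 1) = 0 :=
  fpBar_eq_zero_iff.mpr <| map_neg_sub_one_add_one_of_map_add_one _ (powLift_neg_one hodd) <|
    fpBar_eq_zero_iff.mp h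

theorem fpBar_inv (hx : x ≠ 0) (h : fpBar p x = 0) : fpBar p x⁻¹ = 0 :=
  fpBar_eq_zero_iff.mpr <| map_inv_add_one_of_map_add_one _ hx <| fpBar_eq_zero_iff.mp h

theorem fpBar_one_eq_zero_iff : fpBar p 1 = 0 ↔ (p : ℤ) ^ 2 ∣ 2 ^ p - 2 := by
  have htwo : powLift p 2 = 2 ^ p := by simpa using powLift_intCast (n := p) 2
  rw [fpBar_eq_zero_iff, map_one, one_add_one_eq_two, one_add_one_eq_two, htwo, ← sub_eq_zero,
    ← Nat.cast_pow, ← ZMod.intCast_zmod_eq_zero_iff_dvd]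
  push_cast
  rfl

end Roots

/-- Let `p` be an odd non-Wieferich prime (`p² ∤ 2^p − 2`), and let `x ∈ ℤ/pℤ`
with `x ≠ 0`, `x ≠ −1`, `x² + x + 1 ≠ 0`, and `f̄_p(x) = 0`.  Then the six
elements `x`, `−x−1`, `−(x+1)⁻¹`, `−x·(x+1)⁻¹`, `−(x+1)·x⁻¹`, `x⁻¹` are
pairwise distinct and `f̄_p` vanishes at every one of them. -/
theorem six_pack (p : ℕ) (hp : p.Prime) (hodd : Odd p)
    (hwief : ¬ ((p : ℤ) ^ 2 ∣ 2 ^ p - 2)) (x : ZMod p)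
    (h0 : x ≠ 0) (h1 : x ≠ -1) (h5 : x ^ 2 + x + 1 ≠ 0)
    (hroot : fpBar p x = 0) :
    ([x, -x - 1, -(x + 1)⁻¹, -(x * (x + 1)⁻¹), -((x + 1) * x⁻¹), x⁻¹] : List (ZMod p)).Pairwise
        (· ≠ ·) ∧
      ∀ y ∈ ([x, -x - 1, -(x + 1)⁻¹, -(x * (x + 1)⁻¹), -((x + 1) * x⁻¹), x⁻¹] : List (ZMod p)),
        fpBar p y = 0 := by
  have : Fact p.Prime := ⟨hp⟩
  have hroots : ∀ y ∈ anharmonicOrbit x, fpBar p y = 0 :=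
    forall_mem_anharmonicOrbit (fun _ => fpBar_neg_sub_one hodd) (fun _ => fpBar_inv) h0 h1 hroot
  have hone : 1 ∉ anharmonicOrbit x := fun h => hwief (fpBar_one_eq_zero_iff.mp (hroots 1 h))
  exact ⟨pairwise_ne_anharmonicOrbit h0 h1 h5 hone, hroots⟩
end
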